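/- arXiv:2401.08078 — 2 statements merged into one kernel-verified Lean document; each statement's English description precedes it below -/
import Mathlib

section
/- Let (CoFib, Fib, Weq) be a closed model structure on an exact category 𝒜, with 𝒞 the class of cofibrant objects and T𝓕 the class of trivially fibrant objects. The following are equivalent: (1) cofibrations are exactly the inflations with cofibrant cokernel and every trivial fibration is a deflation; (2) Ext¹(C,Y)=0 for all C∈𝒞, Y∈T𝓕, every cofibration is an inflation, and every trivial fibration is a deflation; (3) trivial fibrations are exactly the deflations with trivially fibrant kernel and every cofibration is an inflation; (4) cofibrations are exactly the inflations with cofibrant cokernel and trivial fibrations are exactly the deflations with trivially fibrant kernel. If moreover 𝒜 is weakly idempotent complete, these are also equivalent to: (5) (𝒞, T𝓕) is a complete cotorsion pair in 𝒜. -/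
open CategoryTheory Limits ZeroObject

universe v u

/-- An exact structure (Quillen exact category) on an additive category `𝒜`:
a class of conflations (kernel-cokernel pairs), closed under isomorphisms,
with identities deflations, deflations closed under composition and stable
under pullback, and inflations stable under pushout. -/
structure ExactStructure (𝒜 : Type u) [Category.{v} 𝒜] [Preadditive 𝒜]
    [HasZeroObject 𝒜] [HasBinaryBiproducts 𝒜] : Type (max u v) where
  conflation : ∀ ⦃X Y Z : 𝒜⦄, (X ⟶ Y) → (Y ⟶ Z) → Prop
  comp_zero : ∀ {X Y Z : 𝒜} {i : X ⟶ Y} {d : Y ⟶ Z}, conflation i d → i ≫ d = 0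
  isKernel : ∀ {X Y Z : 𝒜} {i : X ⟶ Y} {d : Y ⟶ Z} (h : conflation i d),
    Nonempty (IsLimit (KernelFork.ofι i (comp_zero h)))
  isCokernel : ∀ {X Y Z : 𝒜} {i : X ⟶ Y} {d : Y ⟶ Z} (h : conflation i d),
    Nonempty (IsColimit (CokernelCofork.ofπ d (comp_zero h)))
  conflation_iso : ∀ {X Y Z X' Y' Z' : 𝒜} {i : X ⟶ Y} {d : Y ⟶ Z}
    (eX : X ≅ X') (eY : Y ≅ Y') (eZ : Z ≅ Z') {i' : X' ⟶ Y'} {d' : Y' ⟶ Z'},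
    conflation i d → i ≫ eY.hom = eX.hom ≫ i' → d ≫ eZ.hom = eY.hom ≫ d' →
    conflation i' d'
  id_deflation : ∀ X : 𝒜, conflation (0 : (0 : 𝒜) ⟶ X) (𝟙 X)
  deflation_comp : ∀ {X Y Z X' W : 𝒜} {i : X ⟶ Y} {d : Y ⟶ Z} {i' : X' ⟶ Z} {d' : Z ⟶ W},
    conflation i d → conflation i' d' → ∃ (K : 𝒜) (k : K ⟶ Y), conflation k (d ≫ d')
  pullback_deflation : ∀ {X Y Z Z' : 𝒜} {i : X ⟶ Y} {d : Y ⟶ Z},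
    conflation i d → ∀ (f : Z' ⟶ Z),
    ∃ (Y' : 𝒜) (f' : Y' ⟶ Y) (d' : Y' ⟶ Z') (K : 𝒜) (k : K ⟶ Y'),
      IsPullback f' d' d f ∧ conflation k d'
  pushout_inflation : ∀ {X Y Z X' : 𝒜} {i : X ⟶ Y} {d : Y ⟶ Z},
    conflation i d → ∀ (f : X ⟶ X'),
    ∃ (Y' : 𝒜) (f' : Y ⟶ Y') (i' : X' ⟶ Y') (Q : 𝒜) (q : Y' ⟶ Q),
      IsPushout i f f' i' ∧ conflation i' q

variable {𝒜 : Type u} [Category.{v} 𝒜] [Preadditive 𝒜] [HasZeroObject 𝒜]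
  [HasBinaryBiproducts 𝒜]

/-- `f` is an inflation: the first map of some conflation. -/
def IsInflation (E : ExactStructure 𝒜) {X Y : 𝒜} (i : X ⟶ Y) : Prop :=
  ∃ (Z : 𝒜) (d : Y ⟶ Z), E.conflation i d

/-- `f` is a deflation: the second map of some conflation. -/
def IsDeflation (E : ExactStructure 𝒜) {Y Z : 𝒜} (d : Y ⟶ Z) : Prop :=
  ∃ (X : 𝒜) (i : X ⟶ Y), E.conflation i d

/-- `𝒜` is weakly idempotent complete: every split epimorphism is a deflation. -/
def IsWIC (E : ExactStructure 𝒜) : Prop :=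
  ∀ {X Y : 𝒜} (d : X ⟶ Y) (s : Y ⟶ X), s ≫ d = 𝟙 Y → IsDeflation E d

/-- `Ext¹(A,B) = 0`: every conflation `B ⟶ M ⟶ A` splits. -/
def Ext1IsZero (E : ExactStructure 𝒜) (A B : 𝒜) : Prop :=
  ∀ {M : 𝒜} (i : B ⟶ M) (d : M ⟶ A), E.conflation i d → ∃ r : M ⟶ B, i ≫ r = 𝟙 B

/-- `(X, Y)` is a cotorsion pair: each class is the `Ext¹`-orthogonal of the other. -/
def IsCotorsionPair (E : ExactStructure 𝒜) (X Y : Set 𝒜) : Prop :=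
  (∀ A : 𝒜, A ∈ X ↔ ∀ B ∈ Y, Ext1IsZero E A B) ∧
  (∀ B : 𝒜, B ∈ Y ↔ ∀ A ∈ X, Ext1IsZero E A B)

/-- Completeness of a cotorsion pair: every object has approximation sequences. -/
def IsCompleteCP (E : ExactStructure 𝒜) (X Y : Set 𝒜) : Prop :=
  ∀ A : 𝒜,
    (∃ (Y₀ X₀ : 𝒜) (i : Y₀ ⟶ X₀) (d : X₀ ⟶ A), E.conflation i d ∧ X₀ ∈ X ∧ Y₀ ∈ Y) ∧
    (∃ (Y₁ X₁ : 𝒜) (i : A ⟶ Y₁) (d : Y₁ ⟶ X₁), E.conflation i d ∧ X₁ ∈ X ∧ Y₁ ∈ Y)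

/-- Heredity of a cotorsion pair: `X` is closed under kernels of deflations and
`Y` is closed under cokernels of inflations. -/
def IsHereditaryCP (E : ExactStructure 𝒜) (X Y : Set 𝒜) : Prop :=
  (∀ {K A B : 𝒜} (i : K ⟶ A) (d : A ⟶ B), E.conflation i d → A ∈ X → B ∈ X → K ∈ X) ∧
  (∀ {K A B : 𝒜} (i : K ⟶ A) (d : A ⟶ B), E.conflation i d → K ∈ Y → A ∈ Y → B ∈ Y)

/-- `t : W ⟶ B` is a right `ω`-approximation of `B`. -/
def IsRightApprox (ω : Set 𝒜) {W B : 𝒜} (t : W ⟶ B) : Prop :=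
  W ∈ ω ∧ ∀ (W' : 𝒜), W' ∈ ω → ∀ g : W' ⟶ B, ∃ h : W' ⟶ W, h ≫ t = g

/-- `ω` is contravariantly finite: every object has a right `ω`-approximation. -/
def IsContravariantlyFinite (ω : Set 𝒜) : Prop :=
  ∀ B : 𝒜, ∃ (W : 𝒜) (t : W ⟶ B), IsRightApprox ω t

/-- A full additive subcategory closed under isomorphisms and direct summands,
viewed as a class of objects. -/
def AdditivelyClosed (S : Set 𝒜) : Prop :=
  (0 : 𝒜) ∈ S ∧ (∀ A B : 𝒜, A ∈ S → B ∈ S → (A ⊞ B) ∈ S) ∧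
  (∀ {A B : 𝒜}, (A ≅ B) → A ∈ S → B ∈ S) ∧
  (∀ {A B : 𝒜} (i : A ⟶ B) (r : B ⟶ A), i ≫ r = 𝟙 A → B ∈ S → A ∈ S)

/-- `CoFib_ω`: inflations with cokernel in `X`. -/
def CoFibO (E : ExactStructure 𝒜) (X : Set 𝒜) : MorphismProperty 𝒜 :=
  fun _ B f => ∃ (Z : 𝒜) (d : B ⟶ Z), E.conflation f d ∧ Z ∈ X

/-- `Fib_ω`: the `ω`-epic morphisms. -/
def FibO (ω : Set 𝒜) : MorphismProperty 𝒜 :=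
  fun A B f => ∀ (W : 𝒜), W ∈ ω → ∀ g : W ⟶ B, ∃ h : W ⟶ A, h ≫ f = g

/-- `Weq_ω`: morphisms `f : A ⟶ B` such that for some `W ∈ ω` and `t : W ⟶ B`,
`(f,t) : A ⊞ W ⟶ B` is a deflation with kernel in `Y`. -/
def WeqO (E : ExactStructure 𝒜) (ω Y : Set 𝒜) : MorphismProperty 𝒜 :=
  fun A B f => ∃ (W : 𝒜) (_ : W ∈ ω) (t : W ⟶ B) (K : 𝒜) (k : K ⟶ A ⊞ W),
    E.conflation k (biprod.desc f t) ∧ K ∈ Y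

/-- `TCoFib_ω`: split monomorphisms with cokernel in `ω`. -/
def TCoFibO (E : ExactStructure 𝒜) (ω : Set 𝒜) : MorphismProperty 𝒜 :=
  fun A B f => (∃ r : B ⟶ A, f ≫ r = 𝟙 A) ∧
    ∃ (Z : 𝒜) (d : B ⟶ Z), E.conflation f d ∧ Z ∈ ω

/-- `TFib_ω`: deflations with kernel in `Y`. -/
def TFibO (E : ExactStructure 𝒜) (Y : Set 𝒜) : MorphismProperty 𝒜 :=
  fun A _ f => ∃ (K : 𝒜) (k : K ⟶ A), E.conflation k f ∧ K ∈ Y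

/-- `g` is a retract of `f`. -/
def IsRetractMor {A' B' A B : 𝒜} (g : A' ⟶ B') (f : A ⟶ B) : Prop :=
  ∃ (φ₁ : A' ⟶ A) (ψ₁ : A ⟶ A') (φ₂ : B' ⟶ B) (ψ₂ : B ⟶ B'),
    φ₁ ≫ ψ₁ = 𝟙 A' ∧ φ₂ ≫ ψ₂ = 𝟙 B' ∧ φ₁ ≫ f = g ≫ φ₂ ∧ f ≫ ψ₂ = ψ₁ ≫ g

/-- A (closed, Quillen) model structure, given by classes of cofibrations,
fibrations and weak equivalences. -/
structure IsModelStructure (C F W : MorphismProperty 𝒜) : Prop where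
  weq_comp : ∀ {X Y Z : 𝒜} (f : X ⟶ Y) (g : Y ⟶ Z), W f → W g → W (f ≫ g)
  weq_cancel_left : ∀ {X Y Z : 𝒜} (f : X ⟶ Y) (g : Y ⟶ Z), W f → W (f ≫ g) → W g
  weq_cancel_right : ∀ {X Y Z : 𝒜} (f : X ⟶ Y) (g : Y ⟶ Z), W g → W (f ≫ g) → W f
  retract_cofib : ∀ {A' B' A B : 𝒜} (g : A' ⟶ B') (f : A ⟶ B),
    IsRetractMor g f → C f → C g
  retract_fib : ∀ {A' B' A B : 𝒜} (g : A' ⟶ B') (f : A ⟶ B),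
    IsRetractMor g f → F f → F g
  retract_weq : ∀ {A' B' A B : 𝒜} (g : A' ⟶ B') (f : A ⟶ B),
    IsRetractMor g f → W f → W g
  lifting_left : ∀ {A B X Y : 𝒜} (i : A ⟶ B) (p : X ⟶ Y) (a : A ⟶ X) (b : B ⟶ Y),
    C i → W i → F p → a ≫ p = i ≫ b → ∃ s : B ⟶ X, i ≫ s = a ∧ s ≫ p = b
  lifting_right : ∀ {A B X Y : 𝒜} (i : A ⟶ B) (p : X ⟶ Y) (a : A ⟶ X) (b : B ⟶ Y),
    C i → F p → W p → a ≫ p = i ≫ b → ∃ s : B ⟶ X, i ≫ s = a ∧ s ≫ p = b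
  fact_left : ∀ {A B : 𝒜} (f : A ⟶ B), ∃ (Z : 𝒜) (i : A ⟶ Z) (p : Z ⟶ B),
    i ≫ p = f ∧ C i ∧ W i ∧ F p
  fact_right : ∀ {A B : 𝒜} (f : A ⟶ B), ∃ (Z : 𝒜) (j : A ⟶ Z) (q : Z ⟶ B),
    j ≫ q = f ∧ C j ∧ F q ∧ W q

/-- An object is cofibrant if `0 ⟶ X` is a cofibration. -/
def Cofibrant (C : MorphismProperty 𝒜) (A : 𝒜) : Prop := C (0 : (0 : 𝒜) ⟶ A)

/-- An object is fibrant if `X ⟶ 0` is a fibration. -/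
def Fibrant (F : MorphismProperty 𝒜) (A : 𝒜) : Prop := F (0 : A ⟶ (0 : 𝒜))

/-- An object is trivial if `0 ⟶ X` is a weak equivalence. -/
def TrivialObj (W : MorphismProperty 𝒜) (A : 𝒜) : Prop := W (0 : (0 : 𝒜) ⟶ A)

/-- `P` is projective in the exact category. -/
def IsProjObj (E : ExactStructure 𝒜) (P : 𝒜) : Prop :=
  ∀ {A B : 𝒜} (d : A ⟶ B), IsDeflation E d → ∀ g : P ⟶ B, ∃ h : P ⟶ A, h ≫ d = g

/-- The exact category has enough projective objects. -/
def HasEnoughProj (E : ExactStructure 𝒜) : Prop :=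
  ∀ X : 𝒜, ∃ (P : 𝒜) (d : P ⟶ X), IsProjObj E P ∧ IsDeflation E d

/-- Cofibrations are exactly the inflations with cofibrant cokernel. -/
def CofibsAreInflWithCofibCoker (E : ExactStructure 𝒜) (C : MorphismProperty 𝒜) : Prop :=
  ∀ {A B : 𝒜} (f : A ⟶ B),
    C f ↔ ∃ (Z : 𝒜) (d : B ⟶ Z), E.conflation f d ∧ Cofibrant C Z

/-- Fibrations are exactly the deflations with fibrant kernel. -/
def FibsAreDeflWithFibKer (E : ExactStructure 𝒜) (F : MorphismProperty 𝒜) : Prop :=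
  ∀ {A B : 𝒜} (f : A ⟶ B),
    F f ↔ ∃ (K : 𝒜) (k : K ⟶ A), E.conflation k f ∧ Fibrant F K

/-- Trivial fibrations are exactly the deflations with trivially fibrant kernel. -/
def TrivFibsAreDeflWithTrivFibKer (E : ExactStructure 𝒜)
    (F W : MorphismProperty 𝒜) : Prop :=
  ∀ {A B : 𝒜} (f : A ⟶ B),
    (F f ∧ W f) ↔ ∃ (K : 𝒜) (k : K ⟶ A), E.conflation k f ∧ Fibrant F K ∧ TrivialObj W K

/-- Every cofibration is an inflation. -/
def CofibsAreInfl (E : ExactStructure 𝒜) (C : MorphismProperty 𝒜) : Prop :=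
  ∀ {A B : 𝒜} (f : A ⟶ B), C f → IsInflation E f

/-- Every trivial fibration is a deflation. -/
def TrivFibsAreDefl (E : ExactStructure 𝒜) (F W : MorphismProperty 𝒜) : Prop :=
  ∀ {A B : 𝒜} (f : A ⟶ B), F f → W f → IsDeflation E f

/-- An exact model structure in the sense of Gillespie. -/
def IsExactModelStr (E : ExactStructure 𝒜) (C F W : MorphismProperty 𝒜) : Prop :=
  IsModelStructure C F W ∧ CofibsAreInflWithCofibCoker E C ∧ FibsAreDeflWithFibKer E F

/-- A weakly projective model structure: every object is fibrant, cofibrations are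
exactly the inflations with cofibrant cokernel, and trivial fibrations are exactly
the deflations with trivially fibrant kernel. -/
def IsWeaklyProjModelStr (E : ExactStructure 𝒜) (C F W : MorphismProperty 𝒜) : Prop :=
  IsModelStructure C F W ∧ (∀ A : 𝒜, Fibrant F A) ∧
    CofibsAreInflWithCofibCoker E C ∧ TrivFibsAreDeflWithTrivFibKer E F W

/-- A projective model structure: an exact model structure with every object fibrant. -/
def IsProjectiveModelStr (E : ExactStructure 𝒜) (C F W : MorphismProperty 𝒜) : Prop :=
  IsExactModelStr E C F W ∧ (∀ A : 𝒜, Fibrant F A)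

/-- A class of objects is thick: closed under direct summands and two-out-of-three
in conflations. -/
def IsThick (E : ExactStructure 𝒜) (S : Set 𝒜) : Prop :=
  (∀ {A B : 𝒜} (i : A ⟶ B) (r : B ⟶ A), i ≫ r = 𝟙 A → B ∈ S → A ∈ S) ∧
  (∀ {X Y Z : 𝒜} (i : X ⟶ Y) (d : Y ⟶ Z), E.conflation i d →
    ((X ∈ S → Y ∈ S → Z ∈ S) ∧ (X ∈ S → Z ∈ S → Y ∈ S) ∧ (Y ∈ S → Z ∈ S → X ∈ S)))



/-! ### Helper lemmas on exact structures -/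

section Helpers

variable (E : ExactStructure 𝒜)

theorem aux_ker_lift {E : ExactStructure 𝒜} {X Y Z : 𝒜} {i : X ⟶ Y} {d : Y ⟶ Z}
    (h : E.conflation i d) {T : 𝒜} (x : T ⟶ Y) (hx : x ≫ d = 0) : ∃ y : T ⟶ X, y ≫ i = x := by
  obtain ⟨hl⟩ := E.isKernel h
  obtain ⟨l, hl'⟩ := KernelFork.IsLimit.lift' hl x hx
  exact ⟨l, hl'⟩

theorem aux_mono {E : ExactStructure 𝒜} {X Y Z : 𝒜} {i : X ⟶ Y} {d : Y ⟶ Z}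
    (h : E.conflation i d) : Mono i := by
  obtain ⟨hl⟩ := E.isKernel h
  exact mono_of_isLimit_fork hl

theorem aux_coker_desc {E : ExactStructure 𝒜} {X Y Z : 𝒜} {i : X ⟶ Y} {d : Y ⟶ Z}
    (h : E.conflation i d) {T : 𝒜} (x : Y ⟶ T) (hx : i ≫ x = 0) : ∃ y : Z ⟶ T, d ≫ y = x := by
  obtain ⟨hl⟩ := E.isCokernel h
  obtain ⟨l, hl'⟩ := CokernelCofork.IsColimit.desc' hl x hx
  exact ⟨l, hl'⟩

theorem aux_epi {E : ExactStructure 𝒜} {X Y Z : 𝒜} {i : X ⟶ Y} {d : Y ⟶ Z}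
    (h : E.conflation i d) : Epi d := by
  obtain ⟨hl⟩ := E.isCokernel h
  exact epi_of_isColimit_cofork hl

/-- Any kernel of a deflation yields a conflation. -/
theorem aux_conf_of_ker {E : ExactStructure 𝒜} {X Y Z X' : 𝒜} {i : X ⟶ Y} {d : Y ⟶ Z}
    (h : E.conflation i d) (i' : X' ⟶ Y) (h0 : i' ≫ d = 0) [Mono i']
    (hl : ∀ {T : 𝒜} (x : T ⟶ Y), x ≫ d = 0 → ∃ y : T ⟶ X', y ≫ i' = x) :
    E.conflation i' d := by
  haveI := aux_mono h
  obtain ⟨a, ha⟩ := hl i (E.comp_zero h)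
  obtain ⟨b, hb⟩ := aux_ker_lift h i' h0
  let e : X ≅ X' := ⟨a, b, by rw [← cancel_mono i]; simp [ha, hb],
    by rw [← cancel_mono i']; simp [ha, hb]⟩
  exact E.conflation_iso e (Iso.refl _) (Iso.refl _) h (by simp [e, ha]) (by simp)

/-- Any cokernel of an inflation yields a conflation. -/
theorem aux_conf_of_coker {E : ExactStructure 𝒜} {X Y Z Z' : 𝒜} {i : X ⟶ Y} {d : Y ⟶ Z}
    (h : E.conflation i d) (d' : Y ⟶ Z') (h0 : i ≫ d' = 0) [Epi d']
    (hl : ∀ {T : 𝒜} (x : Y ⟶ T), i ≫ x = 0 → ∃ y : Z' ⟶ T, d' ≫ y = x) :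
    E.conflation i d' := by
  haveI := aux_epi h
  obtain ⟨a, ha⟩ := hl d (E.comp_zero h)
  obtain ⟨b, hb⟩ := aux_coker_desc h d' h0
  let e : Z ≅ Z' := ⟨b, a, by rw [← cancel_epi d, reassoc_of% hb]; simp [ha],
    by rw [← cancel_epi d', reassoc_of% ha]; simp [hb]⟩
  exact E.conflation_iso (Iso.refl _) (Iso.refl _) e h (by simp) (by simp [e, hb])

/-- Pushouts of conflations are conflations. -/
theorem aux_push {E : ExactStructure 𝒜} {X Y Z X' Y' : 𝒜} {i : X ⟶ Y} {d : Y ⟶ Z}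
    (h : E.conflation i d) {f : X ⟶ X'} {f' : Y ⟶ Y'} {i' : X' ⟶ Y'}
    (sq : IsPushout i f f' i') (d' : Y' ⟶ Z) (h1 : f' ≫ d' = d) (h2 : i' ≫ d' = 0) :
    E.conflation i' d' := by
  obtain ⟨Y'', f'', i'', Q, q, sq', hc⟩ := E.pushout_inflation h f
  let e := sq'.isoIsPushout _ _ sq
  have he1 : f'' ≫ e.hom = f' := sq'.inl_isoIsPushout_hom _ _ sq
  have he2 : i'' ≫ e.hom = i' := sq'.inr_isoIsPushout_hom _ _ sq
  have hc' : E.conflation i' (e.inv ≫ q) :=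
    E.conflation_iso (Iso.refl _) e (Iso.refl _) hc (by simp [he2]) (by simp)
  haveI := aux_epi h
  haveI : Epi d' := by
    haveI : Epi (f' ≫ d') := by rw [h1]; infer_instance
    exact epi_of_epi f' d'
  refine aux_conf_of_coker hc' d' h2 ?_
  intro T x hx
  obtain ⟨y, hy⟩ := aux_coker_desc h (f' ≫ x) (by rw [sq.w_assoc, hx, comp_zero])
  refine ⟨y, sq.hom_ext ?_ ?_⟩
  · rw [reassoc_of% h1, hy]
  · rw [reassoc_of% h2, hx, zero_comp]

/-- Pullbacks of conflations are conflations. -/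
theorem aux_pull {E : ExactStructure 𝒜} {X Y Z Z' Y' : 𝒜} {i : X ⟶ Y} {d : Y ⟶ Z}
    (h : E.conflation i d) {f : Z' ⟶ Z} {f' : Y' ⟶ Y} {d' : Y' ⟶ Z'}
    (sq : IsPullback f' d' d f) (i' : X ⟶ Y') (h1 : i' ≫ f' = i) (h2 : i' ≫ d' = 0) :
    E.conflation i' d' := by
  obtain ⟨Y'', f'', d'', K, k, sq', hc⟩ := E.pullback_deflation h f
  let e := sq'.isoIsPullback _ _ sq
  have he1 : e.hom ≫ f' = f'' := sq'.isoIsPullback_hom_fst _ _ sq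
  have he2 : e.hom ≫ d' = d'' := sq'.isoIsPullback_hom_snd _ _ sq
  have hc' : E.conflation (k ≫ e.hom) d' :=
    E.conflation_iso (Iso.refl _) e (Iso.refl _) hc (by simp) (by simp [he2])
  haveI := aux_mono h
  haveI : Mono i' := by
    haveI : Mono (i' ≫ f') := by rw [h1]; infer_instance
    exact mono_of_mono i' f'
  refine aux_conf_of_ker hc' i' h2 ?_
  intro T x hx
  obtain ⟨y, hy⟩ := aux_ker_lift h (x ≫ f')
    (by rw [Category.assoc, sq.w, reassoc_of% hx, zero_comp])
  refine ⟨y, sq.hom_ext ?_ ?_⟩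
  · rw [Category.assoc, h1, hy]
  · rw [Category.assoc, h2, hx, comp_zero]

theorem aux_push_exists {E : ExactStructure 𝒜} {X Y Z X' : 𝒜} {i : X ⟶ Y} {d : Y ⟶ Z}
    (h : E.conflation i d) (f : X ⟶ X') :
    ∃ (Y' : 𝒜) (f' : Y ⟶ Y') (i' : X' ⟶ Y') (d' : Y' ⟶ Z),
      IsPushout i f f' i' ∧ f' ≫ d' = d ∧ E.conflation i' d' := by
  obtain ⟨Y', f', i', Q, q, sq, hc⟩ := E.pushout_inflation h f
  have w : i ≫ d = f ≫ (0 : X' ⟶ Z) := by rw [E.comp_zero h, comp_zero]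
  exact ⟨Y', f', i', sq.desc d 0 w, sq, sq.inl_desc _ _ _,
    aux_push h sq _ (sq.inl_desc _ _ _) (sq.inr_desc _ _ _)⟩

theorem aux_pull_exists {E : ExactStructure 𝒜} {X Y Z Z' : 𝒜} {i : X ⟶ Y} {d : Y ⟶ Z}
    (h : E.conflation i d) (f : Z' ⟶ Z) :
    ∃ (Y' : 𝒜) (f' : Y' ⟶ Y) (d' : Y' ⟶ Z') (i' : X ⟶ Y'),
      IsPullback f' d' d f ∧ i' ≫ f' = i ∧ E.conflation i' d' := by
  obtain ⟨Y', f', d', K, k, sq, hc⟩ := E.pullback_deflation h f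
  have w : i ≫ d = (0 : X ⟶ Z') ≫ f := by rw [E.comp_zero h, zero_comp]
  exact ⟨Y', f', d', sq.lift i 0 w, sq, sq.lift_fst _ _ _,
    aux_pull h sq _ (sq.lift_fst _ _ _) (sq.lift_snd _ _ _)⟩

/-- `B = B → 0` is a conflation. -/
theorem aux_id_conf (B : 𝒜) : E.conflation (𝟙 B) (0 : B ⟶ (0 : 𝒜)) := by
  have h := E.id_deflation (0 : 𝒜)
  have h0 : (0 : (0 : 𝒜) ⟶ (0 : 𝒜)) = 𝟙 _ := (isZero_zero 𝒜).eq_of_src _ _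
  refine aux_push h (f := (0 : (0 : 𝒜) ⟶ B)) (f' := 0) ?_ 0
    ((isZero_zero 𝒜).eq_of_src _ _) (by simp)
  have : IsIso (0 : (0 : 𝒜) ⟶ (0 : 𝒜)) := by rw [h0]; infer_instance
  exact IsPushout.of_horiz_isIso ⟨(isZero_zero 𝒜).eq_of_src _ _⟩

/-- Splitting relative to a subobject. -/
theorem aux_section {E : ExactStructure 𝒜} {A B Z K P : 𝒜} {f : A ⟶ B} {d : B ⟶ Z}
    (hf : E.conflation f d) {k : K ⟶ P} {π : P ⟶ B} (hk : E.conflation k π)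
    (hext : Ext1IsZero E Z K) (α : A ⟶ P) (hα : α ≫ π = f) :
    ∃ s : B ⟶ P, f ≫ s = α ∧ s ≫ π = 𝟙 B := by
  haveI := aux_mono hf
  haveI := aux_mono hk
  haveI := aux_epi hk
  have hkπ := E.comp_zero hk
  have hfd := E.comp_zero hf
  obtain ⟨L, l, hl⟩ := E.deflation_comp hk hf
  have hmono : Mono (biprod.desc k α) := by
    refine Preadditive.mono_of_cancel_zero _ ?_
    intro T x hx
    have hx' : (x ≫ biprod.fst) ≫ k + (x ≫ biprod.snd) ≫ α = 0 := by
      rw [← hx, biprod.desc_eq]; simp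
    have h2 : x ≫ biprod.snd = 0 := by
      rw [← cancel_mono f, zero_comp, ← hα]
      have := congrArg (· ≫ π) hx'
      simpa [hkπ] using this
    have h1 : x ≫ biprod.fst = 0 := by
      rw [← cancel_mono k, zero_comp]
      simpa [h2] using hx'
    exact biprod.hom_ext _ _ (by simpa using h1) (by simpa using h2)
  have hc : E.conflation (biprod.desc k α) (π ≫ d) := by
    refine aux_conf_of_ker hl _ ?_ ?_
    · apply biprod.hom_ext'
      · simp [reassoc_of% hkπ]
      · simp [reassoc_of% hα, hfd]
    · intro T x hx
      obtain ⟨y, hy⟩ := aux_ker_lift hf (x ≫ π) (by simpa using hx)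
      obtain ⟨z, hz⟩ := aux_ker_lift hk (x - y ≫ α) (by simp [hα, hy])
      exact ⟨biprod.lift z y, by simp [hz]⟩
  obtain ⟨Y', f', i', d', sq, h1, h2⟩ := aux_push_exists hc (biprod.fst : K ⊞ A ⟶ K)
  obtain ⟨r, hr⟩ := hext i' d' h2
  have hw := sq.w
  have w1 : k ≫ f' = i' := by simpa using congrArg (biprod.inl ≫ ·) hw
  have w2 : α ≫ f' = 0 := by simpa using congrArg (biprod.inr ≫ ·) hw
  obtain ⟨s, hs⟩ := aux_coker_desc hk (𝟙 P - f' ≫ r ≫ k) (by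
    rw [Preadditive.comp_sub, reassoc_of% w1, reassoc_of% hr]; simp)
  refine ⟨s, ?_, ?_⟩
  · rw [← hα, Category.assoc, hs, Preadditive.comp_sub, reassoc_of% w2]; simp
  · rw [← cancel_epi π, reassoc_of% hs]; simp [hkπ]

/-- The lifting lemma. -/
theorem aux_lift {E : ExactStructure 𝒜} {A B Z K X Y : 𝒜} {f : A ⟶ B} {d : B ⟶ Z}
    (hf : E.conflation f d) {k : K ⟶ X} {p : X ⟶ Y} (hk : E.conflation k p)
    (hext : Ext1IsZero E Z K) (a : A ⟶ X) (b : B ⟶ Y) (w : a ≫ p = f ≫ b) :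
    ∃ s : B ⟶ X, f ≫ s = a ∧ s ≫ p = b := by
  obtain ⟨P, b', p', k', sq, h1, h2⟩ := aux_pull_exists hk b
  obtain ⟨s, hs1, hs2⟩ := aux_section hf h2 hext (sq.lift a f w) (sq.lift_snd _ _ _)
  refine ⟨s ≫ b', ?_, ?_⟩
  · rw [reassoc_of% hs1, sq.lift_fst]
  · rw [Category.assoc, sq.w, reassoc_of% hs2]

theorem aux_defl_cancel {E : ExactStructure 𝒜} (hW : IsWIC E) {X₀ X Y : 𝒜} (g : X₀ ⟶ X)
    (p : X ⟶ Y) (h : IsDeflation E (g ≫ p)) : IsDeflation E p := by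
  obtain ⟨L, l, hl⟩ := h
  obtain ⟨P, g', d', l', sq, h1, h2⟩ := aux_pull_exists hl p
  have hw := sq.w
  let σ : X₀ ⟶ P := sq.lift (𝟙 _) g (by simp)
  have hσ1 : σ ≫ g' = 𝟙 _ := sq.lift_fst _ _ _
  have hσ2 : σ ≫ d' = g := sq.lift_snd _ _ _
  obtain ⟨K, κ, hκ⟩ := hW g' σ hσ1
  haveI := aux_mono hκ
  haveI := aux_epi h2
  have hκg := E.comp_zero hκ
  have hld := E.comp_zero h2
  obtain ⟨δ, hδ⟩ := aux_ker_lift hκ (𝟙 P - g' ≫ σ) (by simp [hσ1])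
  have hκδ : κ ≫ δ = 𝟙 _ := by
    rw [← cancel_mono κ, Category.assoc, hδ]; simp [reassoc_of% hκg]
  have hσδ : σ ≫ δ = 0 := by
    rw [← cancel_mono κ, Category.assoc, hδ]; simp [reassoc_of% hσ1]
  have comm : l ≫ g = (-(l' ≫ δ)) ≫ κ ≫ d' := by
    have : δ ≫ κ ≫ d' = d' - g' ≫ g := by
      rw [reassoc_of% hδ]; simp [hσ2]
    simp [this, hld, reassoc_of% h1]
  have po : IsPushout l (-(l' ≫ δ)) g (κ ≫ d') := by
    refine ⟨⟨comm⟩, ⟨PushoutCocone.IsColimit.mk _ (fun s => ?_) ?_ ?_ ?_⟩⟩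
    · exact (aux_coker_desc h2 (g' ≫ s.inl + δ ≫ s.inr) (by
        have := s.condition
        rw [Preadditive.comp_add, reassoc_of% h1, this]; simp)).choose
    · intro s
      generalize_proofs hp
      have := hp.choose_spec
      rw [← hσ2, Category.assoc, this]
      simp [reassoc_of% hσ1, reassoc_of% hσδ]
    · intro s
      generalize_proofs hp
      have := hp.choose_spec
      rw [Category.assoc, this]
      simp [reassoc_of% hκg, reassoc_of% hκδ]
    · intro s m hm1 hm2
      generalize_proofs hp
      have := hp.choose_spec
      rw [← cancel_epi d', this, ← hm1, ← hm2]
      simp only [Category.assoc]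
      rw [reassoc_of% hδ, ← hσ2]; simp
  exact ⟨K, κ ≫ d', aux_push hl po p rfl (by
    rw [Category.assoc, ← hw, reassoc_of% hκg, zero_comp])⟩

theorem aux_infl_cancel {E : ExactStructure 𝒜} (hW : IsWIC E) {A B Y₁ : 𝒜} (f : A ⟶ B)
    (g : B ⟶ Y₁) (h : IsInflation E (f ≫ g)) : IsInflation E f := by
  obtain ⟨X₁, d, hd⟩ := h
  obtain ⟨P, f'', i'', q, sq, h1, h2⟩ := aux_push_exists hd f
  have hw := sq.w
  let ρ : P ⟶ Y₁ := sq.desc (𝟙 _) g (by simp)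
  have hρ1 : f'' ≫ ρ = 𝟙 _ := sq.inl_desc _ _ _
  have hρ2 : i'' ≫ ρ = g := sq.inr_desc _ _ _
  obtain ⟨D, κ, hκ⟩ := hW ρ f'' hρ1
  haveI := aux_mono hκ
  haveI := aux_mono h2
  have hκρ := E.comp_zero hκ
  have hiq := E.comp_zero h2
  obtain ⟨δ, hδ⟩ := aux_ker_lift hκ (𝟙 P - ρ ≫ f'') (by simp [hρ1])
  have hκδ : κ ≫ δ = 𝟙 _ := by
    rw [← cancel_mono κ, Category.assoc, hδ]; simp [reassoc_of% hκρ]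
  have hfδ : f'' ≫ δ = 0 := by
    rw [← cancel_mono κ, Category.assoc, hδ]; simp [reassoc_of% hρ1]
  have comm : g ≫ d = (i'' ≫ δ) ≫ (-(κ ≫ q)) := by
    have : δ ≫ κ ≫ q = q - ρ ≫ d := by
      rw [reassoc_of% hδ]; simp [h1]
    simp [this, hiq, reassoc_of% hρ2]
  have pb : IsPullback g (i'' ≫ δ) d (-(κ ≫ q)) := by
    refine ⟨⟨comm⟩, ⟨PullbackCone.IsLimit.mk _ (fun s => ?_) ?_ ?_ ?_⟩⟩
    · exact (aux_ker_lift h2 (s.fst ≫ f'' + s.snd ≫ κ) (by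
        have := s.condition
        rw [Preadditive.add_comp, Category.assoc, h1, this]; simp)).choose
    · intro s
      generalize_proofs hp
      have := hp.choose_spec
      rw [← hρ2, reassoc_of% this]
      simp [hρ1, hκρ]
    · intro s
      generalize_proofs hp
      have := hp.choose_spec
      rw [reassoc_of% this]
      simp [hfδ, hκδ]
    · intro s m hm1 hm2
      generalize_proofs hp
      have := hp.choose_spec
      rw [← cancel_mono i'', this, ← hm1, ← hm2]
      simp only [Category.assoc]
      rw [hδ, ← hρ2]; simp
  exact ⟨D, i'' ≫ δ, aux_pull hd pb f rfl (by
    rw [← Category.assoc, ← hw, Category.assoc, hfδ, comp_zero])⟩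

end Helpers

/-! ### Helper lemmas on model structures -/

section Model

variable {C F W : MorphismProperty 𝒜}

theorem aux_weq_id (hms : IsModelStructure C F W) (A : 𝒜) : W (𝟙 A) := by
  obtain ⟨Z, i, p, -, -, hi, -⟩ := hms.fact_left (0 : A ⟶ A)
  obtain ⟨Z', j, q, -, -, -, hq⟩ := hms.fact_right (0 : A ⟶ A)
  exact hms.weq_cancel_right (𝟙 A) i hi (by simpa using hi)

theorem aux_cofib_of_llp (hms : IsModelStructure C F W) {A B : 𝒜} (f : A ⟶ B)
    (h : ∀ {X Y : 𝒜} (p : X ⟶ Y) (a : A ⟶ X) (b : B ⟶ Y), F p → W p → a ≫ p = f ≫ b →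
      ∃ s : B ⟶ X, f ≫ s = a ∧ s ≫ p = b) : C f := by
  obtain ⟨Z, j, q, hjq, hj, hF, hW⟩ := hms.fact_right f
  obtain ⟨s, hs1, hs2⟩ := h q j (𝟙 B) hF hW (by simp [hjq])
  exact hms.retract_cofib f j ⟨𝟙 _, 𝟙 _, s, q, by simp, hs2, by simp [hs1], by simp [hjq]⟩ hj

theorem aux_tfib_of_rlp (hms : IsModelStructure C F W) {X Y : 𝒜} (p : X ⟶ Y)
    (h : ∀ {A B : 𝒜} (i : A ⟶ B) (a : A ⟶ X) (b : B ⟶ Y), C i → a ≫ p = i ≫ b →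
      ∃ s : B ⟶ X, i ≫ s = a ∧ s ≫ p = b) : F p ∧ W p := by
  obtain ⟨Z, j, q, hjq, hj, hF, hW⟩ := hms.fact_right p
  obtain ⟨s, hs1, hs2⟩ := h j (𝟙 X) q hj (by simp [hjq])
  have hr : IsRetractMor p q :=
    ⟨j, s, 𝟙 _, 𝟙 _, hs1, by simp, by simp [hjq], by simp [hs2]⟩
  exact ⟨hms.retract_fib p q hr hF, hms.retract_weq p q hr hW⟩

theorem aux_triv_iff (hms : IsModelStructure C F W) (Y : 𝒜) :
    TrivialObj W Y ↔ W (0 : Y ⟶ (0 : 𝒜)) := by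
  have h0 : (0 : (0 : 𝒜) ⟶ Y) ≫ (0 : Y ⟶ (0 : 𝒜)) = 𝟙 _ := (isZero_zero 𝒜).eq_of_src _ _
  have hid : W ((0 : (0 : 𝒜) ⟶ Y) ≫ (0 : Y ⟶ (0 : 𝒜))) := by
    rw [h0]; exact aux_weq_id hms _
  exact ⟨fun h => hms.weq_cancel_left _ _ h hid, fun h => hms.weq_cancel_right _ _ h hid⟩

theorem aux_cofibrant_coker (hms : IsModelStructure C F W) {E : ExactStructure 𝒜} {A B Z : 𝒜}
    {f : A ⟶ B} {d : B ⟶ Z} (h : E.conflation f d) (hf : C f) : Cofibrant C Z := by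
  haveI := aux_epi h
  refine aux_cofib_of_llp hms _ ?_
  intro X Y p a b hF hW _
  obtain ⟨s, hs1, hs2⟩ := hms.lifting_right f p 0 (d ≫ b) hf hF hW
    (by rw [← Category.assoc, E.comp_zero h]; simp)
  obtain ⟨t, ht⟩ := aux_coker_desc h s hs1
  refine ⟨t, (isZero_zero 𝒜).eq_of_src _ _, ?_⟩
  rw [← cancel_epi d, reassoc_of% ht, hs2]

theorem aux_tf_ker (hms : IsModelStructure C F W) {E : ExactStructure 𝒜} {K X Y : 𝒜}
    {k : K ⟶ X} {p : X ⟶ Y} (h : E.conflation k p) (hF : F p) (hW : W p) :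
    Fibrant F K ∧ TrivialObj W K := by
  haveI := aux_mono h
  rw [aux_triv_iff hms]
  refine aux_tfib_of_rlp hms _ ?_
  intro A B i a b hi _
  obtain ⟨s, hs1, hs2⟩ := hms.lifting_right i p (a ≫ k) 0 hi hF hW
    (by rw [Category.assoc, E.comp_zero h]; simp)
  obtain ⟨t, ht⟩ := aux_ker_lift h s hs2
  refine ⟨t, ?_, (isZero_zero 𝒜).eq_of_tgt _ _⟩
  rw [← cancel_mono k, Category.assoc, ht, hs1]

theorem aux_tf_extend (hms : IsModelStructure C F W) {A B Y : 𝒜} {f : A ⟶ B} (hf : C f)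
    (hY : Fibrant F Y ∧ TrivialObj W Y) (a : A ⟶ Y) : ∃ s : B ⟶ Y, f ≫ s = a := by
  obtain ⟨s, hs, -⟩ := hms.lifting_right f (0 : Y ⟶ (0 : 𝒜)) a 0 hf hY.1
    ((aux_triv_iff hms Y).1 hY.2) (by simp)
  exact ⟨s, hs⟩

theorem aux_cofibrant_lift (hms : IsModelStructure C F W) {A X Y : 𝒜} (hA : Cofibrant C A)
    {p : X ⟶ Y} (hF : F p) (hW : W p) (b : A ⟶ Y) : ∃ s : A ⟶ X, s ≫ p = b := by
  obtain ⟨s, -, hs⟩ := hms.lifting_right (0 : (0 : 𝒜) ⟶ A) p 0 b hA hF hW (by simp)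
  exact ⟨s, hs⟩

/-- Condition (2). -/
def AuxCond (E : ExactStructure 𝒜) (C F W : MorphismProperty 𝒜) : Prop :=
  (∀ A B : 𝒜, Cofibrant C A → (Fibrant F B ∧ TrivialObj W B) → Ext1IsZero E A B) ∧
    CofibsAreInfl E C ∧ TrivFibsAreDefl E F W

theorem aux_one_two (hms : IsModelStructure C F W) {E : ExactStructure 𝒜}
    (h1 : CofibsAreInflWithCofibCoker E C) (h2 : TrivFibsAreDefl E F W) : AuxCond E C F W := by
  refine ⟨?_, ?_, h2⟩
  · intro A B hA hB M i d hid
    exact aux_tf_extend hms ((h1 i).2 ⟨A, d, hid, hA⟩) hB (𝟙 B)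
  · intro A B f hf
    obtain ⟨Z, d, hd, -⟩ := (h1 f).1 hf
    exact ⟨Z, d, hd⟩

theorem aux_two_cofib (hms : IsModelStructure C F W) {E : ExactStructure 𝒜}
    (h : AuxCond E C F W) : CofibsAreInflWithCofibCoker E C := by
  intro A B f
  constructor
  · intro hf
    obtain ⟨Z, d, hd⟩ := h.2.1 f hf
    exact ⟨Z, d, hd, aux_cofibrant_coker hms hd hf⟩
  · rintro ⟨Z, d, hd, hZ⟩
    refine aux_cofib_of_llp hms _ ?_
    intro X Y p a b hF hW w
    obtain ⟨K, k, hk⟩ := h.2.2 p hF hW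
    exact aux_lift hd hk (h.1 _ _ hZ (aux_tf_ker hms hk hF hW)) a b w

theorem aux_two_tfib (hms : IsModelStructure C F W) {E : ExactStructure 𝒜}
    (h : AuxCond E C F W) : TrivFibsAreDeflWithTrivFibKer E F W := by
  intro X Y p
  constructor
  · rintro ⟨hF, hW⟩
    obtain ⟨K, k, hk⟩ := h.2.2 p hF hW
    exact ⟨K, k, hk, aux_tf_ker hms hk hF hW⟩
  · rintro ⟨K, k, hk, hK⟩
    refine aux_tfib_of_rlp hms _ ?_
    intro A B i a b hi w
    obtain ⟨Z, d, hd⟩ := h.2.1 i hi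
    exact aux_lift hd hk (h.1 _ _ (aux_cofibrant_coker hms hd hi) hK) a b w

theorem aux_tfib_defl {E : ExactStructure 𝒜}
    (h : TrivFibsAreDeflWithTrivFibKer E F W) : TrivFibsAreDefl E F W := by
  intro X Y p hF hW
  obtain ⟨K, k, hk, -⟩ := (h p).1 ⟨hF, hW⟩
  exact ⟨K, k, hk⟩

theorem aux_three_two (hms : IsModelStructure C F W) {E : ExactStructure 𝒜}
    (h1 : TrivFibsAreDeflWithTrivFibKer E F W) (h2 : CofibsAreInfl E C) : AuxCond E C F W := by
  refine ⟨?_, h2, aux_tfib_defl h1⟩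
  intro A B hA hB M i d hid
  haveI := aux_mono hid
  have hd := (h1 d).2 ⟨B, i, hid, hB⟩
  obtain ⟨s, hs⟩ := aux_cofibrant_lift hms hA hd.1 hd.2 (𝟙 A)
  obtain ⟨r, hr⟩ := aux_ker_lift hid (𝟙 M - d ≫ s) (by simp [hs])
  refine ⟨r, ?_⟩
  rw [← cancel_mono i, Category.assoc, hr, Preadditive.comp_sub, ← Category.assoc i d,
    E.comp_zero hid]
  simp

theorem aux_two_five (hms : IsModelStructure C F W) {E : ExactStructure 𝒜}
    (h : AuxCond E C F W) :
    IsCotorsionPair E {A : 𝒜 | Cofibrant C A} {B : 𝒜 | Fibrant F B ∧ TrivialObj W B} ∧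
      IsCompleteCP E {A : 𝒜 | Cofibrant C A} {B : 𝒜 | Fibrant F B ∧ TrivialObj W B} := by
  refine ⟨⟨?_, ?_⟩, ?_⟩
  · intro A
    refine ⟨fun hA B hB => h.1 A B hA hB, fun hA => ?_⟩
    refine aux_cofib_of_llp hms _ ?_
    intro X Y p a b hF hW w
    obtain ⟨K, k, hk⟩ := h.2.2 p hF hW
    exact aux_lift (E.id_deflation A) hk (hA _ (aux_tf_ker hms hk hF hW)) a b w
  · intro B
    refine ⟨fun hB A hA => h.1 A B hA hB, fun hB => ?_⟩
    show Fibrant F B ∧ TrivialObj W B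
    rw [aux_triv_iff hms]
    refine aux_tfib_of_rlp hms _ ?_
    intro X Y i a b hi w
    obtain ⟨Z, d, hd⟩ := h.2.1 i hi
    exact aux_lift hd (aux_id_conf E B) (hB _ (aux_cofibrant_coker hms hd hi)) a b w
  · intro A
    constructor
    · obtain ⟨Z, j, q, -, hj, hF, hW⟩ := hms.fact_right (0 : (0 : 𝒜) ⟶ A)
      obtain ⟨K, k, hk⟩ := h.2.2 q hF hW
      have hj0 : j = 0 := (isZero_zero 𝒜).eq_of_src _ _
      subst hj0
      exact ⟨K, Z, k, q, hk, hj, aux_tf_ker hms hk hF hW⟩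
    · obtain ⟨Z, j, q, -, hj, hF, hW⟩ := hms.fact_right (0 : A ⟶ (0 : 𝒜))
      obtain ⟨Q, d, hd⟩ := h.2.1 j hj
      have hq0 : q = 0 := (isZero_zero 𝒜).eq_of_tgt _ _
      subst hq0
      exact ⟨Z, Q, j, d, hd, aux_cofibrant_coker hms hd hj, hF, (aux_triv_iff hms Z).2 hW⟩

theorem aux_five_two (hms : IsModelStructure C F W) {E : ExactStructure 𝒜} (hwic : IsWIC E)
    (h1 : IsCotorsionPair E {A : 𝒜 | Cofibrant C A} {B : 𝒜 | Fibrant F B ∧ TrivialObj W B})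
    (h2 : IsCompleteCP E {A : 𝒜 | Cofibrant C A} {B : 𝒜 | Fibrant F B ∧ TrivialObj W B}) :
    AuxCond E C F W := by
  refine ⟨fun A B hA hB => (h1.1 A).1 hA B hB, ?_, ?_⟩
  · intro A B f hf
    obtain ⟨-, Y₁, X₁, i, d, hid, -, hY⟩ := h2 A
    obtain ⟨g, hg⟩ := aux_tf_extend hms hf hY i
    exact aux_infl_cancel hwic f g (by rw [hg]; exact ⟨X₁, d, hid⟩)
  · intro X Y p hF hW
    obtain ⟨⟨Y₀, X₀, i, d, hid, hX, -⟩, -⟩ := h2 Y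
    obtain ⟨g, hg⟩ := aux_cofibrant_lift hms hX hF hW d
    exact aux_defl_cancel hwic g p (by rw [hg]; exact ⟨Y₀, i, hid⟩)

end Model

/-- Characterizations of weak projectivity of a model structure. -/
theorem stmt_17 (E : ExactStructure 𝒜) (C F W : MorphismProperty 𝒜)
    (hms : IsModelStructure C F W) :
    ((CofibsAreInflWithCofibCoker E C ∧ TrivFibsAreDefl E F W) ↔
      ((∀ A B : 𝒜, Cofibrant C A → (Fibrant F B ∧ TrivialObj W B) → Ext1IsZero E A B) ∧
        CofibsAreInfl E C ∧ TrivFibsAreDefl E F W)) ∧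
    ((CofibsAreInflWithCofibCoker E C ∧ TrivFibsAreDefl E F W) ↔
      (TrivFibsAreDeflWithTrivFibKer E F W ∧ CofibsAreInfl E C)) ∧
    ((CofibsAreInflWithCofibCoker E C ∧ TrivFibsAreDefl E F W) ↔
      (CofibsAreInflWithCofibCoker E C ∧ TrivFibsAreDeflWithTrivFibKer E F W)) ∧
    (IsWIC E →
      ((CofibsAreInflWithCofibCoker E C ∧ TrivFibsAreDefl E F W) ↔
        (IsCotorsionPair E {A : 𝒜 | Cofibrant C A}
            {B : 𝒜 | Fibrant F B ∧ TrivialObj W B} ∧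
         IsCompleteCP E {A : 𝒜 | Cofibrant C A}
            {B : 𝒜 | Fibrant F B ∧ TrivialObj W B}))) := by
  have e12 : (CofibsAreInflWithCofibCoker E C ∧ TrivFibsAreDefl E F W) ↔ AuxCond E C F W :=
    ⟨fun h => aux_one_two hms h.1 h.2, fun h => ⟨aux_two_cofib hms h, h.2.2⟩⟩
  refine ⟨e12, ?_, ?_, fun hwic => ?_⟩
  · rw [e12]
    exact ⟨fun h => ⟨aux_two_tfib hms h, h.2.1⟩, fun h => aux_three_two hms h.1 h.2⟩
  · exact ⟨fun h => ⟨h.1, aux_two_tfib hms (e12.1 h)⟩, fun h => ⟨h.1, aux_tfib_defl h.2⟩⟩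
  · rw [e12]
    exact ⟨fun h => aux_two_five hms h, fun h => aux_five_two hms hwic h.1 h.2⟩
end

section
/- Let 𝒜 be a weakly idempotent complete exact category. A model structure on 𝒜 is both exact and weakly projective if and only if it is projective (i.e. exact with every object fibrant). In this case, the left triangulated structure on the homotopy category Ho(𝒜) is in fact a triangulated category. -/
open CategoryTheory Limits ZeroObject

universe v u

variable {𝒜 : Type u} [Category.{v} 𝒜] [Preadditive 𝒜] [HasZeroObject 𝒜]
  [HasBinaryBiproducts 𝒜]

/-- The data of a triangulated category structure on a category. -/
structure TriangulatedStructure (D : Type*) [Category D] where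
  [preadditive : Preadditive D]
  [hasZeroObject : HasZeroObject D]
  [hasShift : HasShift D ℤ]
  [shiftAdditive : ∀ n : ℤ, (shiftFunctor D n).Additive]
  [pretriangulated : Pretriangulated D]
  [isTriangulated : IsTriangulated D]

namespace ExPr

open Pretriangulated

theorem triangulatedStructure_of_equiv {T D : Type*} [Category T] [Category D] [Preadditive T]
    [HasZeroObject T] [HasShift T ℤ] [∀ n : ℤ, (shiftFunctor T n).Additive] [Pretriangulated T]
    [IsTriangulated T] (L : T ⥤ D) [L.IsEquivalence] : Nonempty (TriangulatedStructure D) := by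
  let P : ObjectProperty T := IsZero
  have hz : P.ContainsZero := ⟨⟨0, isZero_zero T, isZero_zero T⟩⟩
  have hs : P.IsStableUnderShift ℤ := ⟨fun a => ⟨fun X hX => (shiftFunctor T a).map_isZero hX⟩⟩
  have hiso : P.IsClosedUnderIsomorphisms := ⟨fun e h => h.of_iso e.symm⟩
  have h2 : P.IsTriangulatedClosed₂ := .mk' (fun T hT h₁ h₃ => by
    exact Triangle.isZero₂_of_isZero₁₃ T hT h₁ h₃)
  have ht : P.IsTriangulated := {}
  have hW : P.trW = MorphismProperty.isomorphisms T := by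
    ext X Y f
    rw [ObjectProperty.trW_iff, MorphismProperty.isomorphisms.iff]
    constructor
    · rintro ⟨Z, g, h, hT, hZ⟩
      exact (Triangle.isZero₃_iff_isIso₁ _ hT).1 hZ
    · intro hf
      obtain ⟨Z, g, h, hT⟩ := Pretriangulated.distinguished_cocone_triangle f
      exact ⟨Z, g, h, hT, (Triangle.isZero₃_iff_isIso₁ _ hT).2 hf⟩
  have hL : L.IsLocalization P.trW := by
    rw [hW]
    exact Functor.IsLocalization.of_isEquivalence L _ (by rfl)
  let := Localization.preadditive L P.trW
  have : L.Additive := Localization.functor_additive L P.trW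
  let : HasShift D ℤ := HasShift.localized L P.trW ℤ
  let : L.CommShift ℤ := Functor.CommShift.localized L P.trW ℤ
  have : HasZeroObject D := ⟨⟨L.obj 0, L.map_isZero (isZero_zero T)⟩⟩
  have : ∀ n : ℤ, (shiftFunctor D n).Additive := fun n => by
    rw [Localization.functor_additive_iff L P.trW]
    exact Functor.additive_of_iso (L.commShiftIso n)
  let : Pretriangulated D := Triangulated.Localization.pretriangulated L P.trW
  have : IsTriangulated D := Triangulated.Localization.isTriangulated L P.trW
  exact ⟨{}⟩

end ExPr

namespace ExPr

variable {E : ExactStructure 𝒜}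

lemma conf_lift {X Y Z T : 𝒜} {i : X ⟶ Y} {d : Y ⟶ Z} (h : E.conflation i d)
    (t : T ⟶ Y) (ht : t ≫ d = 0) : ∃ s : T ⟶ X, s ≫ i = t := by
  obtain ⟨l⟩ := E.isKernel h
  exact ⟨(KernelFork.IsLimit.lift' l t ht).1, (KernelFork.IsLimit.lift' l t ht).2⟩

lemma conf_desc {X Y Z T : 𝒜} {i : X ⟶ Y} {d : Y ⟶ Z} (h : E.conflation i d)
    (t : Y ⟶ T) (ht : i ≫ t = 0) : ∃ s : Z ⟶ T, d ≫ s = t := by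
  obtain ⟨l⟩ := E.isCokernel h
  exact ⟨(CokernelCofork.IsColimit.desc' l t ht).1, (CokernelCofork.IsColimit.desc' l t ht).2⟩

lemma conf_mono {X Y Z : 𝒜} {i : X ⟶ Y} {d : Y ⟶ Z} (h : E.conflation i d) : Mono i := by
  obtain ⟨l⟩ := E.isKernel h
  exact mono_of_isLimit_fork l

lemma conf_epi {X Y Z : 𝒜} {i : X ⟶ Y} {d : Y ⟶ Z} (h : E.conflation i d) : Epi d := by
  obtain ⟨l⟩ := E.isCokernel h
  exact epi_of_isColimit_cofork l

/-- A deflation together with any kernel forms a conflation. -/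
lemma conf_of_defl {X Y Z : 𝒜} {i : X ⟶ Y} {d : Y ⟶ Z} (hd : IsDeflation E d)
    (hm : Mono i) (h0 : i ≫ d = 0)
    (hl : ∀ {T : 𝒜} (t : T ⟶ Y), t ≫ d = 0 → ∃ s : T ⟶ X, s ≫ i = t) : E.conflation i d := by
  obtain ⟨K, k, hk⟩ := hd
  have := conf_mono hk
  obtain ⟨a, ha⟩ := conf_lift hk i h0
  obtain ⟨b, hb⟩ := hl k (E.comp_zero hk)
  refine E.conflation_iso (⟨b, a, ?_, ?_⟩ : K ≅ X) (Iso.refl Y) (Iso.refl Z) hk ?_ ?_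
  · rw [← cancel_mono k]; simp [ha, hb]
  · rw [← cancel_mono i]; simp [ha, hb]
  · simp [hb]
  · simp

/-- An inflation together with any cokernel forms a conflation. -/
lemma conf_of_infl {X Y Z : 𝒜} {i : X ⟶ Y} {d : Y ⟶ Z} (hi : IsInflation E i)
    (hm : Epi d) (h0 : i ≫ d = 0)
    (hl : ∀ {T : 𝒜} (t : Y ⟶ T), i ≫ t = 0 → ∃ s : Z ⟶ T, d ≫ s = t) : E.conflation i d := by
  obtain ⟨K, k, hk⟩ := hi
  have := conf_epi hk
  obtain ⟨a, ha⟩ := conf_desc hk d h0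
  obtain ⟨b, hb⟩ := hl k (E.comp_zero hk)
  refine E.conflation_iso (Iso.refl X) (Iso.refl Y) (⟨a, b, ?_, ?_⟩ : K ≅ Z) hk ?_ ?_
  · rw [← cancel_epi k]; simp [reassoc_of% ha, hb]
  · rw [← cancel_epi d]; simp [ha, reassoc_of% hb]
  · simp
  · simp [ha]

lemma defl_iso_left {X Y Z : 𝒜} (e : X ≅ Y) {d : Y ⟶ Z} (h : IsDeflation E d) :
    IsDeflation E (e.hom ≫ d) := by
  obtain ⟨K, k, hk⟩ := h
  exact ⟨K, k ≫ e.inv, E.conflation_iso (Iso.refl K) e.symm (Iso.refl Z) hk (by simp) (by simp)⟩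

lemma defl_comp {X Y Z : 𝒜} {d : X ⟶ Y} {d' : Y ⟶ Z} (h : IsDeflation E d)
    (h' : IsDeflation E d') : IsDeflation E (d ≫ d') := by
  obtain ⟨_, _, h⟩ := h
  obtain ⟨_, _, h'⟩ := h'
  exact E.deflation_comp h h'

lemma defl_pullback {P X Y Z : 𝒜} {fst : P ⟶ X} {snd : P ⟶ Y} {f : X ⟶ Z} {g : Y ⟶ Z}
    (h : IsPullback fst snd f g) (hf : IsDeflation E f) : IsDeflation E snd := by
  obtain ⟨_, _, hf⟩ := hf
  obtain ⟨Y', f', d', K, k, hp, hk⟩ := E.pullback_deflation hf g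
  have : snd = (h.isoIsPullback _ _ hp).hom ≫ d' := by simp
  rw [this]
  exact defl_iso_left _ ⟨K, k, hk⟩

lemma infl_pushout {P X Y Z : 𝒜} {f : Z ⟶ X} {g : Z ⟶ Y} {inl : X ⟶ P} {inr : Y ⟶ P}
    (h : IsPushout f g inl inr) (hf : IsInflation E f) : IsInflation E inr := by
  obtain ⟨_, _, hf⟩ := hf
  obtain ⟨Y', f', d', Q, q, hp, hk⟩ := E.pushout_inflation hf g
  have e : d' ≫ (hp.isoIsPushout _ _ h).hom = inr := by simp
  exact ⟨Q, (hp.isoIsPushout _ _ h).inv ≫ q,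
    E.conflation_iso (Iso.refl _) (hp.isoIsPushout _ _ h) (Iso.refl _) hk (by simp [e]) (by simp)⟩

/-- The kernel of the pulled back deflation is the original kernel. -/
lemma conf_pullback {K P X Y Z : 𝒜} {k : K ⟶ X} {fst : P ⟶ X} {snd : P ⟶ Y} {f : X ⟶ Z}
    {g : Y ⟶ Z} (h : IsPullback fst snd f g) (hf : E.conflation k f) :
    ∃ j : K ⟶ P, j ≫ fst = k ∧ j ≫ snd = 0 ∧ E.conflation j snd := by
  have := conf_mono hf
  have w : k ≫ f = (0 : K ⟶ Y) ≫ g := by simp [E.comp_zero hf]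
  refine ⟨h.lift k 0 w, by simp, by simp, conf_of_defl (defl_pullback h ⟨_, _, hf⟩) ?_ (by simp) ?_⟩
  · have : Mono (h.lift k 0 w ≫ fst) := by simpa
    exact mono_of_mono _ fst
  · intro T t ht
    obtain ⟨s, hs⟩ := conf_lift hf (t ≫ fst) (by rw [Category.assoc, h.w, reassoc_of% ht, zero_comp])
    exact ⟨s, h.hom_ext (by simp [hs]) (by simp [ht])⟩

lemma conf_pushout {P X Y Z Q : 𝒜} {f : Z ⟶ X} {g : Z ⟶ Y} {inl : X ⟶ P} {inr : Y ⟶ P}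
    {q : X ⟶ Q} (h : IsPushout f g inl inr) (hf : E.conflation f q) :
    ∃ j : P ⟶ Q, inl ≫ j = q ∧ inr ≫ j = 0 ∧ E.conflation inr j := by
  have := conf_epi hf
  have w : f ≫ q = g ≫ (0 : Y ⟶ Q) := by simp [E.comp_zero hf]
  refine ⟨h.desc q 0 w, by simp, by simp, conf_of_infl (infl_pushout h ⟨_, _, hf⟩) ?_ (by simp) ?_⟩
  · have : Epi (inl ≫ h.desc q 0 w) := by simpa
    exact epi_of_epi inl _
  · intro T t ht
    obtain ⟨s, hs⟩ := conf_desc hf (inl ≫ t) (by rw [← Category.assoc, h.w, Category.assoc, ht, comp_zero])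
    exact ⟨s, h.hom_ext (by simp [hs]) (by simp [ht])⟩

lemma defl_id (X : 𝒜) : IsDeflation E (𝟙 X) := ⟨_, _, E.id_deflation X⟩

lemma defl_iso {X Y : 𝒜} (e : X ≅ Y) : IsDeflation E e.hom := by
  simpa using defl_iso_left e (defl_id (E := E) Y)

lemma pb_map_id {X Y : 𝒜} (d : X ⟶ Y) (T : 𝒜) :
    IsPullback (biprod.fst : X ⊞ T ⟶ X) (biprod.map d (𝟙 T)) d (biprod.fst : Y ⊞ T ⟶ Y) := by
  refine ⟨⟨by simp⟩, ⟨PullbackCone.IsLimit.mk _ (fun s => biprod.lift s.fst (s.snd ≫ biprod.snd))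
    (by simp) (fun s => ?_) (fun s m h1 h2 => ?_)⟩⟩
  · have := s.condition
    ext <;> simp [this]
  · have := h2 =≫ biprod.snd
    simp only [Category.assoc, biprod.map_snd, Category.comp_id] at this
    ext <;> simp [h1, this]

lemma defl_map_id {X Y : 𝒜} {d : X ⟶ Y} (h : IsDeflation E d) (T : 𝒜) :
    IsDeflation E (biprod.map d (𝟙 T)) := defl_pullback (pb_map_id d T) h

lemma defl_zero (X : 𝒜) : IsDeflation E (0 : X ⟶ 0) := by
  refine ⟨X, 𝟙 X, ?_⟩
  have h0 : IsInflation E (𝟙 (0 : 𝒜)) :=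
    ⟨_, 𝟙 _, by have := E.id_deflation (0 : 𝒜); rwa [show (𝟙 (0:𝒜)) = 0 from by simp] at *⟩
  have hp : IsPushout (𝟙 (0 : 𝒜)) (0 : (0 : 𝒜) ⟶ X) (0 : (0 : 𝒜) ⟶ X) (𝟙 X) := by
    simpa using IsPushout.of_id_fst (f := (0 : (0 : 𝒜) ⟶ X))
  refine conf_of_infl (infl_pushout hp h0) ?_ (by simp) ?_
  · exact ⟨fun _ _ _ => (isZero_zero 𝒜).eq_of_src _ _⟩
  · intro T t ht
    exact ⟨0, by simpa using ht.symm⟩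

lemma conf_id_zero (X : 𝒜) : E.conflation (𝟙 X) (0 : X ⟶ 0) :=
  conf_of_defl (defl_zero X) inferInstance (by simp) (fun t _ => ⟨t, by simp⟩)

lemma conf_zero_id (X : 𝒜) : E.conflation (0 : (0 : 𝒜) ⟶ X) (𝟙 X) := E.id_deflation X

/-- Split conflation. -/
lemma conf_biprod (X Y : 𝒜) : E.conflation (biprod.inl : X ⟶ X ⊞ Y) biprod.snd := by
  have h : IsPullback (biprod.fst : X ⊞ Y ⟶ X) biprod.snd (0 : X ⟶ 0) (0 : Y ⟶ 0) :=
    ⟨⟨by simp⟩, ⟨PullbackCone.IsLimit.mk _ (fun s => biprod.lift s.fst s.snd)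
      (by simp) (by simp) (fun s m h1 h2 => by ext <;> simp [h1, h2])⟩⟩
  refine conf_of_defl (defl_pullback h (defl_zero X)) inferInstance (by simp) ?_
  intro T t ht
  exact ⟨t ≫ biprod.fst, by ext <;> simp [ht]⟩

/-- If `i, c` is a conflation and `e ≫ c` is a deflation, then `[i, e]` is a deflation. -/
lemma defl_desc {M N Z R : 𝒜} {i : M ⟶ N} {c : N ⟶ Z} (h : E.conflation i c) (e : R ⟶ N)
    (he : IsDeflation E (e ≫ c)) : IsDeflation E (biprod.desc i e) := by
  have := conf_mono h
  have hw : i ≫ c = 0 := E.comp_zero h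
  have hp : IsPullback (biprod.snd : M ⊞ R ⟶ R) (biprod.desc i e) (e ≫ c) c := by
    have key : ∀ s : PullbackCone (e ≫ c) c, ∃ l : s.pt ⟶ M, l ≫ i = s.snd - s.fst ≫ e :=
      fun s => conf_lift h _ (by rw [Preadditive.sub_comp, ← s.condition]; simp)
    choose l hl using key
    refine ⟨⟨by ext <;> simp [hw]⟩, ⟨PullbackCone.IsLimit.mk _
      (fun s => biprod.lift (l s) s.fst)
      (by simp) (fun s => ?_) (fun s m h1 h2 => ?_)⟩⟩
    · simp [biprod.lift_desc, hl]
    · ext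
      · rw [← cancel_mono i, biprod.lift_fst, hl, ← h2, ← h1, biprod.desc_eq]
        simp
      · simpa using h1
  exact defl_pullback hp he

lemma defl_of_zero_desc (hwic : IsWIC E) {A Y Z : 𝒜} {g : Y ⟶ Z}
    (h : IsDeflation E (biprod.desc (0 : A ⟶ Z) g)) : IsDeflation E g := by
  obtain ⟨L, l, hl⟩ := h
  have hlm := conf_mono hl
  obtain ⟨s, hs⟩ := conf_lift hl (biprod.inl : A ⟶ A ⊞ Y) (by simp)
  have hs' : s ≫ l ≫ biprod.fst = 𝟙 A := by rw [reassoc_of% hs]; simp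
  obtain ⟨K, k, hk⟩ := hwic (l ≫ biprod.fst) s hs'
  have hkm := conf_mono hk
  obtain ⟨r, hr⟩ := conf_lift hk (𝟙 L - (l ≫ biprod.fst) ≫ s) (by
    rw [Preadditive.sub_comp, Category.assoc, Category.id_comp, hs', Category.comp_id, sub_self])
  have hkr : k ≫ r = 𝟙 K := by
    rw [← cancel_mono k, Category.assoc, hr, Preadditive.comp_sub, ← Category.assoc k,
      E.comp_zero hk]
    simp
  have hsr : s ≫ r = 0 := by
    rw [← cancel_mono k, Category.assoc, hr, Preadditive.comp_sub, Category.assoc, reassoc_of% hs']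
    simp
  have hlg : l ≫ biprod.snd ≫ g = 0 := by
    have := E.comp_zero hl
    rw [biprod.desc_eq] at this
    simpa using this
  have hrk : r ≫ k ≫ l ≫ biprod.snd = l ≫ biprod.snd := by
    rw [reassoc_of% hr]
    simp [reassoc_of% hs]
  have hp : IsPushout l r (biprod.snd : A ⊞ Y ⟶ Y) (k ≫ l ≫ biprod.snd) := by
    refine ⟨⟨hrk.symm⟩, ⟨PushoutCocone.IsColimit.mk _ (fun t => biprod.inr ≫ t.inl)
      (fun t => ?_) (fun t => ?_) (fun t m h1 h2 => ?_)⟩⟩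
    · have h1 : biprod.inl ≫ t.inl = 0 := by
        rw [← hs, Category.assoc, t.condition, reassoc_of% hsr, zero_comp]
      ext <;> simp [h1]
    · have h1 : biprod.inl ≫ t.inl = 0 := by
        rw [← hs, Category.assoc, t.condition, reassoc_of% hsr, zero_comp]
      have h2 : (biprod.snd : A ⊞ Y ⟶ Y) ≫ biprod.inr ≫ t.inl = t.inl := by
        ext <;> simp [h1]
      simp only [Category.assoc]
      rw [h2, t.condition, reassoc_of% hkr]
    · rw [← h1]; simp
  refine ⟨K, k ≫ l ≫ biprod.snd, conf_of_infl (infl_pushout hp ⟨_, _, hl⟩) ?_ ?_ ?_⟩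
  · have : Epi ((biprod.snd : A ⊞ Y ⟶ Y) ≫ g) := by
      have := conf_epi hl
      rw [biprod.desc_eq] at this
      simpa using this
    exact epi_of_epi (biprod.snd : A ⊞ Y ⟶ Y) g
  · simp [hlg]
  · intro T t ht
    have h1 : l ≫ biprod.snd ≫ t = 0 := by
      rw [← Category.assoc, ← hrk]; simp only [Category.assoc]
      simp only [Category.assoc] at ht
      rw [ht, comp_zero]
    obtain ⟨q, hq⟩ := conf_desc hl (biprod.snd ≫ t) h1
    refine ⟨q, ?_⟩
    have := biprod.inr ≫= hq
    simpa using this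

/-- In a weakly idempotent complete exact category, `e ≫ g` deflation implies `g` deflation. -/
lemma defl_of_comp (hwic : IsWIC E) {A Y Z : 𝒜} (e : A ⟶ Y) (g : Y ⟶ Z)
    (h : IsDeflation E (e ≫ g)) : IsDeflation E g := by
  have h1 : IsDeflation E (biprod.desc (𝟙 Z) g) := hwic _ biprod.inl (by simp)
  have h2 := defl_comp (defl_map_id h Y) h1
  apply defl_of_zero_desc hwic (A := A)
  let a : A ⊞ Y ≅ A ⊞ Y :=
    { hom := biprod.lift biprod.fst (biprod.snd - biprod.fst ≫ e)
      inv := biprod.lift biprod.fst (biprod.snd + biprod.fst ≫ e)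
      hom_inv_id := by ext <;> simp
      inv_hom_id := by ext <;> simp }
  have h3 := defl_iso_left a h2
  convert h3 using 1
  have h4 : biprod.map (e ≫ g) (𝟙 Y) ≫ biprod.desc (𝟙 Z) g =
      biprod.fst ≫ e ≫ g + biprod.snd ≫ g := by ext <;> simp
  rw [h4]
  simp only [a, Preadditive.comp_add, biprod.lift_fst_assoc, biprod.lift_snd_assoc]
  ext <;> simp

lemma conf_smul {X Y Z : 𝒜} {i : X ⟶ Y} {d : Y ⟶ Z} (h : E.conflation i d) (ε : ℤˣ) :
    E.conflation i (ε • d) := by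
  rcases Int.units_eq_one_or ε with rfl | rfl
  · simpa using h
  · refine E.conflation_iso (Iso.refl X) (Iso.refl Y)
      (⟨-𝟙 Z, -𝟙 Z, by simp, by simp⟩ : Z ≅ Z) h (by simp) (by simp)

end ExPr

namespace ExPr

/-- Unbundled projective model structure on a weakly idempotent complete exact category. -/
structure Ctx (E : ExactStructure 𝒜) (C F W : MorphismProperty 𝒜) : Prop where
  wic : IsWIC E
  ms : IsModelStructure C F W
  hC : CofibsAreInflWithCofibCoker E C
  hF : FibsAreDeflWithFibKer E F
  fib : ∀ A : 𝒜, Fibrant F A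

variable {E : ExactStructure 𝒜} {C F W : MorphismProperty 𝒜}

namespace Ctx

lemma fib_iff (h : Ctx E C F W) {A B : 𝒜} (f : A ⟶ B) : F f ↔ IsDeflation E f := by
  rw [h.hF f]
  exact ⟨fun ⟨K, k, hk, _⟩ => ⟨K, k, hk⟩, fun ⟨K, k, hk⟩ => ⟨K, k, hk, h.fib K⟩⟩

lemma weq_id (h : Ctx E C F W) (A : 𝒜) : W (𝟙 A) := by
  obtain ⟨Z, j, q, -, -, -, hq⟩ := h.ms.fact_right (𝟙 A)
  exact h.ms.weq_cancel_left q (𝟙 A) hq (by simpa using hq)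

lemma cof_of_llp (h : Ctx E C F W) {A B : 𝒜} (i : A ⟶ B)
    (H : ∀ {X Y : 𝒜} (p : X ⟶ Y) (a : A ⟶ X) (b : B ⟶ Y), F p → W p → a ≫ p = i ≫ b →
      ∃ s : B ⟶ X, i ≫ s = a ∧ s ≫ p = b) : C i := by
  obtain ⟨Z, j, q, e, hj, hq, hq'⟩ := h.ms.fact_right i
  obtain ⟨s, hs, hs'⟩ := H q j (𝟙 B) hq hq' (by simpa using e)
  exact h.ms.retract_cofib i j ⟨𝟙 A, 𝟙 A, s, q, by simp, hs', by simp [hs], by simp [e]⟩ hj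

lemma tfib_of_rlp (h : Ctx E C F W) {A B : 𝒜} (f : A ⟶ B)
    (H : ∀ {X Y : 𝒜} (i : X ⟶ Y) (a : X ⟶ A) (b : Y ⟶ B), C i → a ≫ f = i ≫ b →
      ∃ s : Y ⟶ A, i ≫ s = a ∧ s ≫ f = b) : F f ∧ W f := by
  obtain ⟨Z, j, q, e, hj, hq, hq'⟩ := h.ms.fact_right f
  obtain ⟨s, hs, hs'⟩ := H j (𝟙 A) q hj (by simpa using e.symm)
  have hr : IsRetractMor f q := ⟨j, s, 𝟙 B, 𝟙 B, hs, by simp, by simp [e], by simp [hs']⟩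
  exact ⟨h.ms.retract_fib f q hr hq, h.ms.retract_weq f q hr hq'⟩

lemma triv_iff (h : Ctx E C F W) (K : 𝒜) : TrivialObj W K ↔ W (0 : K ⟶ (0 : 𝒜)) := by
  have e : (0 : (0 : 𝒜) ⟶ K) ≫ (0 : K ⟶ (0 : 𝒜)) = 𝟙 _ := by simp
  have hi : W ((0 : (0 : 𝒜) ⟶ K) ≫ (0 : K ⟶ (0 : 𝒜))) := by rw [e]; exact h.weq_id _
  exact ⟨fun hk => h.ms.weq_cancel_left _ _ hk hi, fun hk => h.ms.weq_cancel_right _ _ hk hi⟩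

/-- maps into trivial objects extend along cofibrations -/
lemma extend (h : Ctx E C F W) {M N K : 𝒜} {i : M ⟶ N} (hi : C i) (hK : TrivialObj W K)
    (a : M ⟶ K) : ∃ b : N ⟶ K, i ≫ b = a := by
  obtain ⟨s, hs, -⟩ := h.ms.lifting_right i (0 : K ⟶ 0) a 0 hi (h.fib K) ((h.triv_iff K).1 hK)
    (by simp)
  exact ⟨s, hs⟩

lemma proj_of_triv_cof (h : Ctx E C F W) {R : 𝒜} (hR : Cofibrant C R) (hR' : TrivialObj W R) :
    IsProjObj E R := by
  intro A B d hd g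
  obtain ⟨s, -, hs⟩ := h.ms.lifting_left (0 : (0 : 𝒜) ⟶ R) d 0 g hR hR' ((h.fib_iff d).2 hd)
    (by simp)
  exact ⟨s, hs⟩

lemma enough' (h : Ctx E C F W) (N : 𝒜) : ∃ (R : 𝒜) (e : R ⟶ N), Cofibrant C R ∧
    TrivialObj W R ∧ IsDeflation E e := by
  obtain ⟨R, i, e, -, h1, h2, h3⟩ := h.ms.fact_left (0 : (0 : 𝒜) ⟶ N)
  obtain rfl : i = 0 := (isZero_zero 𝒜).eq_of_src _ _
  exact ⟨R, e, h1, h2, (h.fib_iff e).1 h3⟩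

lemma proj_cof (h : Ctx E C F W) {R : 𝒜} (hR : IsProjObj E R) : Cofibrant C R := by
  obtain ⟨R', e, h1, h2, h3⟩ := h.enough' R
  obtain ⟨s, hs⟩ := hR e h3 (𝟙 R)
  exact h.ms.retract_cofib (0 : (0 : 𝒜) ⟶ R) (0 : (0 : 𝒜) ⟶ R')
    ⟨𝟙 _, 𝟙 _, s, e, by simp, hs, by simp, by simp⟩ h1

lemma proj_triv (h : Ctx E C F W) {R : 𝒜} (hR : IsProjObj E R) : TrivialObj W R := by
  obtain ⟨R', e, h1, h2, h3⟩ := h.enough' R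
  obtain ⟨s, hs⟩ := hR e h3 (𝟙 R)
  exact h.ms.retract_weq (0 : (0 : 𝒜) ⟶ R) (0 : (0 : 𝒜) ⟶ R')
    ⟨𝟙 _, 𝟙 _, s, e, by simp, hs, by simp, by simp⟩ h2

lemma enough (h : Ctx E C F W) (N : 𝒜) : ∃ (R : 𝒜) (e : R ⟶ N), IsProjObj E R ∧
    IsDeflation E e := by
  obtain ⟨R', e, h1, h2, h3⟩ := h.enough' N
  exact ⟨R', e, h.proj_of_triv_cof h1 h2, h3⟩

/-- deflations with trivial kernel are trivial fibrations -/
lemma tfib (h : Ctx E C F W) {K A B : 𝒜} {k : K ⟶ A} {f : A ⟶ B} (hk : E.conflation k f)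
    (hK : TrivialObj W K) : F f ∧ W f := by
  apply h.tfib_of_rlp
  intro M N i a b hi w
  obtain ⟨Z, c, hic, hZ⟩ := (h.hC i).1 hi
  obtain ⟨R, e, hR, he⟩ := h.enough N
  obtain ⟨t, ht⟩ := hR f ⟨_, _, hk⟩ (e ≫ b)
  obtain ⟨Ω, o, ho⟩ := defl_comp he ⟨_, _, hic⟩
  have hoz := E.comp_zero ho
  obtain ⟨m, hm⟩ := conf_lift hic (o ≫ e) (by simpa using hoz)
  obtain ⟨δ, hδ⟩ := conf_lift hk (o ≫ t - m ≫ a) (by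
    rw [Preadditive.sub_comp, Category.assoc, Category.assoc, ht, w, reassoc_of% hm, sub_self])
  obtain ⟨δ', hδ'⟩ := h.extend ((h.hC o).2 ⟨Z, _, ho, hZ⟩) hK δ
  have hd : IsDeflation E (biprod.desc i e) := defl_desc hic e ⟨_, _, ho⟩
  obtain ⟨Q, q, hq⟩ := hd
  have hmi := conf_mono hic
  have hkf := E.comp_zero hk
  have hz : q ≫ biprod.desc a (t - δ' ≫ k) = 0 := by
    have hq0 := E.comp_zero hq
    rw [biprod.desc_eq, Preadditive.comp_add] at hq0
    obtain ⟨y, hy⟩ := conf_lift ho (q ≫ biprod.snd) (by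
      have := hq0 =≫ c
      rw [Preadditive.add_comp] at this
      simp only [Category.assoc, E.comp_zero hic, comp_zero, zero_add, zero_comp] at this
      simpa using this)
    have hy2 : q ≫ biprod.fst = - y ≫ m := by
      rw [← cancel_mono i, Preadditive.neg_comp, Category.assoc, Category.assoc, hm,
        reassoc_of% hy]
      exact eq_neg_of_add_eq_zero_left hq0
    rw [biprod.desc_eq, Preadditive.comp_add, ← Category.assoc, ← Category.assoc, hy2, ← hy,
      Category.assoc, Preadditive.comp_sub, reassoc_of% hδ', hδ]
    simp
  obtain ⟨s, hs⟩ := conf_desc hq _ hz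
  have hs1 : i ≫ s = a := by simpa using biprod.inl ≫= hs
  have hs2 : e ≫ s = t - δ' ≫ k := by simpa using biprod.inr ≫= hs
  refine ⟨s, hs1, ?_⟩
  have := conf_epi hq
  rw [← cancel_epi (biprod.desc i e)]
  ext
  · simp [reassoc_of% hs1, w]
  · simp [reassoc_of% hs2, ht, hkf]

lemma tfib_ker (h : Ctx E C F W) {K A B : 𝒜} {k : K ⟶ A} {f : A ⟶ B} (hk : E.conflation k f)
    (h1 : F f) (h2 : W f) : TrivialObj W K := by
  rw [h.triv_iff]
  refine (h.tfib_of_rlp _ ?_).2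
  intro X Y i a b hi _
  obtain ⟨s, hs, hs'⟩ := h.ms.lifting_right i f (a ≫ k) 0 hi h1 h2 (by simp [E.comp_zero hk])
  obtain ⟨t, ht⟩ := conf_lift hk s hs'
  have := conf_mono hk
  exact ⟨t, by rw [← cancel_mono k]; simp [ht, hs], (isZero_zero 𝒜).eq_of_tgt _ _⟩

lemma triv_of_weq (h : Ctx E C F W) {A B : 𝒜} (f : A ⟶ B) (hf : W f) :
    TrivialObj W A ↔ TrivialObj W B := by
  have e : (0 : (0 : 𝒜) ⟶ A) ≫ f = 0 := by simp
  constructor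
  · intro hA
    have := h.ms.weq_comp _ _ hA hf
    rwa [e] at this
  · intro hB
    exact h.ms.weq_cancel_right _ _ hf (by rw [e]; exact hB)

lemma cof_comp (h : Ctx E C F W) {X Y Z : 𝒜} {i : X ⟶ Y} {j : Y ⟶ Z} (hi : C i) (hj : C j) :
    C (i ≫ j) := by
  apply h.cof_of_llp
  intro A B p a b h1 h2 w
  obtain ⟨s, hs, hs'⟩ := h.ms.lifting_right i p a (j ≫ b) hi h1 h2 (by simpa using w)
  obtain ⟨t, ht, ht'⟩ := h.ms.lifting_right j p s b hj h1 h2 hs'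
  exact ⟨t, by simp [ht, hs], ht'⟩

lemma cof_ext (h : Ctx E C F W) {X Y Z : 𝒜} {i : X ⟶ Y} {d : Y ⟶ Z} (hc : E.conflation i d)
    (hX : Cofibrant C X) (hZ : Cofibrant C Z) : Cofibrant C Y := by
  have := h.cof_comp (i := (0 : (0 : 𝒜) ⟶ X)) (j := i) hX ((h.hC i).2 ⟨Z, d, hc, hZ⟩)
  simpa [Cofibrant] using this

lemma cof_zero (h : Ctx E C F W) : Cofibrant C (0 : 𝒜) := by
  apply h.cof_of_llp
  intro X Y p a b _ _ _
  exact ⟨0, (isZero_zero 𝒜).eq_of_src _ _, (isZero_zero 𝒜).eq_of_src _ _⟩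

lemma repl (h : Ctx E C F W) (X : 𝒜) : ∃ (Q : 𝒜) (q : Q ⟶ X), Cofibrant C Q ∧ F q ∧ W q := by
  obtain ⟨Q, j, q, -, h1, h2, h3⟩ := h.ms.fact_right (0 : (0 : 𝒜) ⟶ X)
  obtain rfl : j = 0 := (isZero_zero 𝒜).eq_of_src _ _
  exact ⟨Q, q, h1, h2, h3⟩

lemma lift (h : Ctx E C F W) {X A B : 𝒜} (hX : Cofibrant C X) {p : A ⟶ B} (h1 : F p) (h2 : W p)
    (g : X ⟶ B) : ∃ s : X ⟶ A, s ≫ p = g := by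
  obtain ⟨s, -, hs⟩ := h.ms.lifting_right (0 : (0 : 𝒜) ⟶ X) p 0 g hX h1 h2 (by simp)
  exact ⟨s, hs⟩

lemma factor_triv (h : Ctx E C F W) {X K : 𝒜} (hX : Cofibrant C X) (hK : TrivialObj W K)
    (g : X ⟶ K) : ∃ (R : 𝒜) (a : X ⟶ R) (b : R ⟶ K), IsProjObj E R ∧ a ≫ b = g := by
  obtain ⟨R, q, h1, h2, h3⟩ := h.repl K
  obtain ⟨a, ha⟩ := h.lift hX h2 h3 g
  exact ⟨R, a, q, h.proj_of_triv_cof h1 ((h.triv_of_weq q h3).2 hK), ha⟩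

lemma cosyz (h : Ctx E C F W) {X : 𝒜} (hX : Cofibrant C X) : ∃ (I X' : 𝒜) (i : X ⟶ I)
    (p : I ⟶ X'), E.conflation i p ∧ IsProjObj E I ∧ Cofibrant C X' := by
  obtain ⟨I, j, q, -, h1, h2, h3⟩ := h.ms.fact_right (0 : X ⟶ (0 : 𝒜))
  obtain ⟨X', p, hp, hX'⟩ := (h.hC j).1 h1
  obtain rfl : q = 0 := (isZero_zero 𝒜).eq_of_tgt _ _
  exact ⟨I, X', j, p, hp, h.proj_of_triv_cof (h.cof_ext hp hX hX') ((h.triv_iff I).2 h3), hX'⟩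

lemma cof_ker (h : Ctx E C F W) {Ω R X : 𝒜} {o : Ω ⟶ R} {d : R ⟶ X} (hc : E.conflation o d)
    (hR : IsProjObj E R) (hX : Cofibrant C X) : Cofibrant C Ω := by
  obtain ⟨X0, q, hX0, hq, hq'⟩ := h.repl Ω
  obtain ⟨Y0, k, hk⟩ := (h.fib_iff q).1 hq
  have hY0 := h.tfib_ker hk hq hq'
  obtain ⟨I, X', j, p, hj, hI, hX'⟩ := h.cosyz hX0
  -- the pushout of `j` along `q`
  obtain ⟨Y2, g, i', _, _, hpo, -⟩ := E.pushout_inflation hj q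
  obtain ⟨c, hc1, hc2, hcc⟩ := conf_pushout hpo hj
  have hm := conf_mono hj
  have hmi := conf_mono hcc
  have hg : IsDeflation E g := by
    have h1 : IsDeflation E (biprod.desc i' g) := defl_desc hcc g (by rw [hc1]; exact ⟨_, _, hj⟩)
    have h2 := defl_comp (defl_map_id ((h.fib_iff q).1 hq) I) h1
    refine defl_of_comp h.wic (biprod.desc j (𝟙 I)) g ?_
    convert h2 using 1
    ext
    · simp [hpo.w]
    · simp
  -- the kernel of `g` is `Y0`
  have hmk := conf_mono hk
  have hkg : E.conflation (k ≫ j) g := by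
    refine conf_of_defl hg (mono_comp k j) ?_ ?_
    · rw [Category.assoc, hpo.w, ← Category.assoc, E.comp_zero hk, zero_comp]
    · intro T t ht
      obtain ⟨x, hx⟩ := conf_lift hj t (by rw [← hc1, reassoc_of% ht, zero_comp])
      obtain ⟨y, hy⟩ := conf_lift hk x (by
        rw [← cancel_mono i', Category.assoc, ← hpo.w, reassoc_of% hx, ht, zero_comp])
      exact ⟨y, by rw [reassoc_of% hy, hx]⟩
  have hY2 : TrivialObj W Y2 := (h.triv_of_weq g (h.tfib hkg hY0).2).1 (h.proj_triv hI)
  obtain ⟨r, hr⟩ := h.extend ((h.hC o).2 ⟨X, d, hc, hX⟩) hY2 i'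
  obtain ⟨r', hr'⟩ := hR g hg r
  obtain ⟨s, hs⟩ := conf_lift hj (o ≫ r') (by
    rw [← hc1, Category.assoc, reassoc_of% hr', reassoc_of% hr, hc2])
  have hsq : s ≫ q = 𝟙 Ω := by
    rw [← cancel_mono i', Category.assoc, ← hpo.w, reassoc_of% hs, hr', hr, Category.id_comp]
  exact h.ms.retract_cofib (0 : (0 : 𝒜) ⟶ Ω) (0 : (0 : 𝒜) ⟶ X0)
    ⟨𝟙 _, 𝟙 _, s, q, by simp, hsq, by simp, by simp⟩ hX0

lemma syz (h : Ctx E C F W) {X : 𝒜} (hX : Cofibrant C X) : ∃ (R X' : 𝒜) (i : X' ⟶ R)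
    (p : R ⟶ X), E.conflation i p ∧ IsProjObj E R ∧ Cofibrant C X' := by
  obtain ⟨R, p, hR, K, k, hk⟩ := h.enough X
  exact ⟨R, K, k, p, hk, hR, h.cof_ker hk hR hX⟩

/-- weak equivalences: a split mono with trivial-fibration retraction followed by a
trivial fibration. -/
lemma weq_factor (h : Ctx E C F W) {A B : 𝒜} {w : A ⟶ B} (hw : W w) :
    ∃ (Z : 𝒜) (i : A ⟶ Z) (r : Z ⟶ A) (p : Z ⟶ B), i ≫ p = w ∧ i ≫ r = 𝟙 A ∧ F r ∧ W r ∧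
      F p ∧ W p := by
  obtain ⟨Z, i, p, e, h1, h2, h3⟩ := h.ms.fact_left w
  obtain ⟨r, hr, -⟩ := h.ms.lifting_left i (0 : A ⟶ 0) (𝟙 A) 0 h1 h2 (h.fib A) (by simp)
  refine ⟨Z, i, r, p, e, hr, ?_, ?_, h3, ?_⟩
  · exact (h.fib_iff r).2 (h.wic r i hr)
  · exact h.ms.weq_cancel_left i r h2 (by rw [hr]; exact h.weq_id A)
  · exact h.ms.weq_cancel_left i p h2 (by rwa [e])

end Ctx

lemma proj_biprod {A B : 𝒜} (hA : IsProjObj E A) (hB : IsProjObj E B) : IsProjObj E (A ⊞ B) := by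
  intro X Y d hd g
  obtain ⟨a, ha⟩ := hA d hd (biprod.inl ≫ g)
  obtain ⟨b, hb⟩ := hB d hd (biprod.inr ≫ g)
  exact ⟨biprod.desc a b, by ext <;> simp [ha, hb]⟩

lemma proj_iso {A B : 𝒜} (e : A ≅ B) (hA : IsProjObj E A) : IsProjObj E B := by
  intro X Y d hd g
  obtain ⟨a, ha⟩ := hA d hd (e.hom ≫ g)
  exact ⟨e.inv ≫ a, by simp [ha]⟩

end ExPr

namespace ExPr

variable {E : ExactStructure 𝒜} {C F W : MorphismProperty 𝒜}

/-- `f` and `g` differ by a morphism factoring through a projective. -/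
def St (E : ExactStructure 𝒜) {X Y : 𝒜} (f g : X ⟶ Y) : Prop :=
  ∃ (R : 𝒜) (a : X ⟶ R) (b : R ⟶ Y), IsProjObj E R ∧ f - g = a ≫ b

lemma proj_zero : IsProjObj E (0 : 𝒜) := fun _ _ _ => ⟨0, (isZero_zero 𝒜).eq_of_src _ _⟩

lemma St.refl {X Y : 𝒜} (f : X ⟶ Y) : St E f f := ⟨0, 0, 0, proj_zero, by simp⟩

lemma St.symm {X Y : 𝒜} {f g : X ⟶ Y} (h : St E f g) : St E g f := by
  obtain ⟨R, a, b, hR, e⟩ := h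
  exact ⟨R, -a, b, hR, by rw [Preadditive.neg_comp, ← e, neg_sub]⟩

lemma St.trans {X Y : 𝒜} {f g k : X ⟶ Y} (h : St E f g) (h' : St E g k) : St E f k := by
  obtain ⟨R, a, b, hR, e⟩ := h
  obtain ⟨R', a', b', hR', e'⟩ := h'
  refine ⟨R ⊞ R', biprod.lift a a', biprod.desc b b', proj_biprod hR hR', ?_⟩
  rw [biprod.lift_desc, ← e, ← e']
  abel

lemma St.comp {X Y Z : 𝒜} {f g : X ⟶ Y} (h : St E f g) (k : Y ⟶ Z) : St E (f ≫ k) (g ≫ k) := by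
  obtain ⟨R, a, b, hR, e⟩ := h
  exact ⟨R, a, b ≫ k, hR, by rw [← Preadditive.sub_comp, e, Category.assoc]⟩

/-- the setoid of stable equivalence -/
def stSetoid (E : ExactStructure 𝒜) (X Y : 𝒜) : Setoid (X ⟶ Y) :=
  ⟨St E, St.refl, St.symm, St.trans⟩

/-- stable Hom functor -/
def stHom (E : ExactStructure 𝒜) (X : 𝒜) : 𝒜 ⥤ Type v where
  obj Y := Quotient (stSetoid E X Y)
  map g := ↾(Quotient.map (fun f => f ≫ g) (fun _ _ h => St.comp h g))
  map_id Y := by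
    ext ⟨f⟩
    exact congrArg _ (Category.comp_id f)
  map_comp f g := by
    ext ⟨k⟩
    exact congrArg _ (Category.assoc k f g).symm

lemma Ctx.loc_eq (h : Ctx E C F W) {X Y : 𝒜} {f g : X ⟶ Y} (hfg : St E f g) :
    W.Q.map f = W.Q.map g := by
  obtain ⟨R, a, b, hR, e⟩ := hfg
  have hw : W (biprod.snd : R ⊞ X ⟶ X) := (h.tfib (conf_biprod R X) (h.proj_triv hR)).2
  have := Localization.inverts W.Q W _ hw
  have h1 : W.Q.map (biprod.lift a (𝟙 X)) = W.Q.map (biprod.lift 0 (𝟙 X)) := by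
    rw [← cancel_mono (W.Q.map (biprod.snd : R ⊞ X ⟶ X)), ← Functor.map_comp, ← Functor.map_comp]
    simp
  have h2 : f = biprod.lift a (𝟙 X) ≫ biprod.desc b g := by
    simp [← e]
  have h3 : g = biprod.lift 0 (𝟙 X) ≫ biprod.desc b g := by
    simp
  rw [h2, Functor.map_comp, h1, ← Functor.map_comp, ← h3]

lemma Ctx.stHom_tfib (h : Ctx E C F W) {X : 𝒜} (hX : Cofibrant C X) {A B : 𝒜} {p : A ⟶ B}
    (h1 : F p) (h2 : W p) : IsIso ((stHom E X).map p) := by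
  rw [isIso_iff_bijective]
  constructor
  · rintro ⟨f⟩ ⟨g⟩ hfg
    obtain ⟨R, a, b, hR, e⟩ := Quotient.exact hfg
    obtain ⟨K, k, hk⟩ := (h.fib_iff p).1 h1
    obtain ⟨b', hb'⟩ := hR p ⟨_, _, hk⟩ b
    obtain ⟨t, ht⟩ := conf_lift hk (f - g - a ≫ b') (by
      simp only [Preadditive.sub_comp, Category.assoc, hb']
      rw [← e, sub_self])
    obtain ⟨R', a', c, hR', e'⟩ := h.factor_triv hX (h.tfib_ker hk h1 h2) t
    refine Quotient.sound ⟨R ⊞ R', biprod.lift a a', biprod.desc b' (c ≫ k), proj_biprod hR hR', ?_⟩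
    rw [biprod.lift_desc, reassoc_of% e', ht]
    abel
  · rintro ⟨f⟩
    obtain ⟨s, hs⟩ := h.lift hX h1 h2 f
    exact ⟨Quotient.mk _ s, congrArg _ hs⟩

lemma Ctx.stHom_inverts (h : Ctx E C F W) {X : 𝒜} (hX : Cofibrant C X) :
    W.IsInvertedBy (stHom E X) := by
  intro A B w hw
  obtain ⟨Z, i, r, p, e, e', h1, h2, h3, h4⟩ := h.weq_factor hw
  have := h.stHom_tfib hX h1 h2
  have := h.stHom_tfib hX h3 h4
  have : IsIso ((stHom E X).map i) := by
    have h5 : (stHom E X).map i ≫ (stHom E X).map r = 𝟙 _ := by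
      rw [← Functor.map_comp, e', CategoryTheory.Functor.map_id]
    have h6 : IsIso ((stHom E X).map i ≫ (stHom E X).map r) := by rw [h5]; infer_instance
    exact IsIso.of_isIso_comp_right _ ((stHom E X).map r)
  rw [← e, Functor.map_comp]
  infer_instance

lemma Ctx.st_of_loc_eq (h : Ctx E C F W) {X Y : 𝒜} (hX : Cofibrant C X) {f g : X ⟶ Y}
    (hfg : W.Q.map f = W.Q.map g) : St E f g := by
  have h1 := (areEqualizedByLocalization_iff W.Q W f g).2 hfg
  have h2 := h1.map_eq_of_isInvertedBy (stHom E X) (h.stHom_inverts hX)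
  have h3 := congrArg (fun φ => φ (Quotient.mk (stSetoid E X X) (𝟙 X))) h2
  have h4 : Quotient.mk (stSetoid E X Y) (𝟙 X ≫ f) = Quotient.mk (stSetoid E X Y) (𝟙 X ≫ g) := h3
  have h5 : St E (𝟙 X ≫ f) (𝟙 X ≫ g) := Quotient.exact h4
  simpa using h5

lemma Ctx.loc_lift (h : Ctx E C F W) {X : 𝒜} (hX : Cofibrant C X) {A B : W.Localization}
    (u : A ⟶ B) : ∀ (A' B' : 𝒜) (eA : W.Q.obj A' = A) (eB : W.Q.obj B' = B) (g : X ⟶ A'),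
    ∃ k : X ⟶ B', W.Q.map g ≫ eqToHom eA ≫ u = W.Q.map k ≫ eqToHom eB := by
  have inj : ∀ {A B : 𝒜}, W.Q.obj A = W.Q.obj B → A = B := fun e =>
    (Localization.Construction.objEquiv W).injective e
  let P : MorphismProperty W.Localization := fun A B u =>
    ∀ (A' B' : 𝒜) (eA : W.Q.obj A' = A) (eB : W.Q.obj B' = B) (g : X ⟶ A'),
    ∃ k : X ⟶ B', W.Q.map g ≫ eqToHom eA ≫ u = W.Q.map k ≫ eqToHom eB
  have hPc : P.IsStableUnderComposition := ⟨by
    intro A B D u v hu hv A' D' eA eD g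
    obtain ⟨k, hk⟩ := hu A' _ eA ((Localization.Construction.objEquiv W).right_inv B) g
    obtain ⟨k', hk'⟩ := hv _ D' ((Localization.Construction.objEquiv W).right_inv B) eD k
    refine ⟨k', ?_⟩
    rw [← hk', ← Category.assoc, ← Category.assoc, Category.assoc _ _ u, hk, Category.assoc]⟩
  have hPt : P = ⊤ := by
    apply Localization.Construction.morphismProperty_eq_top
    · intro A B f A' B' eA eB g
      obtain rfl := inj eA
      obtain rfl := inj eB
      exact ⟨g ≫ f, by simp⟩
    · intro A B w hw B' A' eB eA g
      obtain rfl := inj eA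
      obtain rfl := inj eB
      obtain ⟨Z, i, r, p, e, e', h1, h2, h3, h4⟩ := h.weq_factor hw
      obtain ⟨s, hs⟩ := h.lift hX h3 h4 g
      refine ⟨s ≫ r, ?_⟩
      have h5 := Localization.inverts W.Q W _ h2
      have h6 : W.Q.map r ≫ W.Q.map i = 𝟙 _ := by
        rw [← cancel_mono (W.Q.map r), Category.assoc, ← Functor.map_comp, e']
        simp
      rw [← cancel_mono (Localization.Construction.wIso w hw).hom]
      change _ = _ ≫ W.Q.map w
      simp only [eqToHom_refl, Category.id_comp, Category.comp_id, Category.assoc, Iso.inv_hom_id]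
      rw [← hs, ← e, Functor.map_comp, Functor.map_comp, Functor.map_comp, Category.assoc,
        reassoc_of% h6]
  have : P u := by rw [hPt]; trivial
  exact this

lemma Ctx.loc_full (h : Ctx E C F W) {X Y : 𝒜} (hX : Cofibrant C X)
    (u : W.Q.obj X ⟶ W.Q.obj Y) : ∃ f : X ⟶ Y, W.Q.map f = u := by
  obtain ⟨k, hk⟩ := h.loc_lift hX u X Y rfl rfl (𝟙 X)
  exact ⟨k, by simpa using hk.symm⟩

end ExPr

namespace ExPr

/-- Bi-infinite dependent recursion. -/
theorem zseq {T : ℤ → Type*} (Rel : ∀ n, T n → T (n + 1) → Prop)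
    (hf : ∀ n t, ∃ t', Rel n t t') (hb : ∀ n t', ∃ t, Rel n t t')
    (t0 : T 0) (t1 : T (0 + 1)) (h01 : Rel 0 t0 t1) :
    ∃ t : ∀ n, T n, t 0 = t0 ∧ t (0 + 1) = t1 ∧ ∀ n, Rel n (t n) (t (n + 1)) := by
  choose f hf using hf
  choose g hg using hb
  let a : ∀ n : ℕ, T (Int.ofNat n + 1) := fun n =>
    Nat.rec t1 (fun n x => f (Int.ofNat (n + 1)) x) n
  let b : ∀ n : ℕ, T (Int.negSucc n) := fun n =>
    Nat.rec (g (Int.negSucc 0) t0) (fun n x => g (Int.negSucc (n + 1)) x) n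
  let t : ∀ n, T n := fun n => match n with
    | Int.ofNat 0 => t0
    | Int.ofNat (n + 1) => a n
    | Int.negSucc n => b n
  refine ⟨t, rfl, rfl, ?_⟩
  rintro (n | n)
  · cases n with
    | zero => exact h01
    | succ n => exact hf (Int.ofNat (n + 1)) _
  · cases n with
    | zero => exact hg (Int.negSucc 0) t0
    | succ n => exact hg (Int.negSucc (n + 1)) _

theorem zseq0 {T : ℤ → Type*} (Rel : ∀ n, T n → T (n + 1) → Prop)
    (hf : ∀ n t, ∃ t', Rel n t t') (hb : ∀ n t', ∃ t, Rel n t t') (t0 : T 0) :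
    ∃ t : ∀ n, T n, t 0 = t0 ∧ ∀ n, Rel n (t n) (t (n + 1)) := by
  obtain ⟨t1, h1⟩ := hf 0 t0
  obtain ⟨t, h, _, h'⟩ := zseq Rel hf hb t0 t1 h1
  exact ⟨t, h, h'⟩

theorem zseq1 {T : ℤ → Type*} (Rel : ∀ n, T n → T (n + 1) → Prop)
    (hf : ∀ n t, ∃ t', Rel n t t') (hb : ∀ n t', ∃ t, Rel n t t') (t1 : T 1) :
    ∃ t : ∀ n, T n, t 1 = t1 ∧ ∀ n, Rel n (t n) (t (n + 1)) := by
  obtain ⟨t0, h0⟩ := hb 0 t1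
  obtain ⟨t, _, h, h'⟩ := zseq Rel hf hb t0 t1 h0
  exact ⟨t, h, h'⟩

end ExPr

namespace ExPr

variable {E : ExactStructure 𝒜} {C F W : MorphismProperty 𝒜}

/-- Data exhibiting a complex of projectives as totally acyclic with cofibrant cycles. -/
structure TAD (E : ExactStructure 𝒜) (C : MorphismProperty 𝒜) (K : CochainComplex 𝒜 ℤ) where
  Z : ℤ → 𝒜
  i : ∀ n, Z n ⟶ K.X n
  p : ∀ n m, n + 1 = m → (K.X n ⟶ Z m)
  conf : ∀ n m h, E.conflation (i n) (p n m h)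
  hd : ∀ n m h, K.d n m = p n m h ≫ i m
  cof : ∀ n, Cofibrant C (Z n)
  proj : ∀ n, IsProjObj E (K.X n)

/-- constructor with only consecutive indices -/
def TAD.mk' {K : CochainComplex 𝒜 ℤ} (Z : ℤ → 𝒜) (i : ∀ n, Z n ⟶ K.X n)
    (p : ∀ n, (K.X n ⟶ Z (n + 1))) (conf : ∀ n, E.conflation (i n) (p n))
    (hd : ∀ n, K.d n (n + 1) = p n ≫ i (n + 1)) (cof : ∀ n, Cofibrant C (Z n))
    (proj : ∀ n, IsProjObj E (K.X n)) : TAD E C K where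
  Z := Z
  i := i
  p n m h := p n ≫ eqToHom (by rw [h])
  conf := by
    rintro n _ rfl
    simpa using conf n
  hd := by
    rintro n _ rfl
    simpa using hd n
  cof := cof
  proj := proj

lemma Ctx.exists_TAD (h : Ctx E C F W) {X : 𝒜} (hX : Cofibrant C X) :
    ∃ (K : CochainComplex 𝒜 ℤ) (D : TAD E C K), D.Z 1 = X := by
  obtain ⟨t, ht, hr⟩ := zseq1 (T := fun _ => {X : 𝒜 // Cofibrant C X})
    (fun _ X Y => ∃ (R : 𝒜) (i : X.1 ⟶ R) (p : R ⟶ Y.1), E.conflation i p ∧ IsProjObj E R)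
    (fun n X => by
      obtain ⟨R, Y, i, p, h1, h2, h3⟩ := h.cosyz X.2
      exact ⟨⟨Y, h3⟩, R, i, p, h1, h2⟩)
    (fun n X => by
      obtain ⟨R, Y, i, p, h1, h2, h3⟩ := h.syz X.2
      exact ⟨⟨Y, h3⟩, R, i, p, h1, h2⟩) ⟨X, hX⟩
  choose R i p hc hR using hr
  refine ⟨CochainComplex.of R (fun n => p n ≫ i (n + 1)) (fun n => ?_),
    TAD.mk' (fun n => (t n).1) i p hc (fun n => ?_) (fun n => (t n).2) hR, ?_⟩
  · rw [Category.assoc, reassoc_of% (E.comp_zero (hc (n + 1)))]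
    simp
  · exact CochainComplex.of_d R (fun n => p n ≫ i (n + 1)) n
  · exact congrArg Subtype.val ht

variable {K L : CochainComplex 𝒜 ℤ}

lemma TAD.cofib (h : Ctx E C F W) (D : TAD E C K) (n : ℤ) : C (D.i n) :=
  (h.hC _).2 ⟨_, _, D.conf n _ rfl, D.cof _⟩

lemma TAD.extend (h : Ctx E C F W) (D : TAD E C K) (D' : TAD E C L) (z : D.Z 1 ⟶ D'.Z 1) :
    ∃ f : K ⟶ L, D.i 1 ≫ f.f 1 = z ≫ D'.i 1 := by
  obtain ⟨t, ht, hr⟩ := zseq1 (T := fun n => D.Z n ⟶ D'.Z n)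
    (fun n z z' => ∃ f : K.X n ⟶ L.X n, D.i n ≫ f = z ≫ D'.i n ∧
      f ≫ D'.p n _ rfl = D.p n _ rfl ≫ z')
    (fun n z => by
      obtain ⟨f, hf⟩ := h.extend (D.cofib h n) (h.proj_triv (D'.proj n)) (z ≫ D'.i n)
      obtain ⟨z', hz⟩ := conf_desc (D.conf n _ rfl) (f ≫ D'.p n _ rfl) (by
        rw [reassoc_of% hf, E.comp_zero (D'.conf n _ rfl), comp_zero])
      exact ⟨z', f, hf, hz.symm⟩)
    (fun n z => by
      obtain ⟨f, hf⟩ := D.proj n (D'.p n _ rfl) ⟨_, _, D'.conf n _ rfl⟩ (D.p n _ rfl ≫ z)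
      obtain ⟨z', hz⟩ := conf_lift (D'.conf n _ rfl) (D.i n ≫ f) (by
        rw [Category.assoc, hf, ← Category.assoc, E.comp_zero (D.conf n _ rfl), zero_comp])
      exact ⟨z', f, hz.symm, hf⟩) z
  choose f h1 h2 using hr
  refine ⟨{ f := f, comm' := ?_ }, ?_⟩
  · rintro n _ rfl
    rw [D.hd n _ rfl, D'.hd n _ rfl, reassoc_of% (h2 n), Category.assoc, h1]
  · rw [← ht]
    exact h1 1

lemma TAD.induced (D : TAD E C K) (D' : TAD E C L) (f : K ⟶ L) (n : ℤ) :
    ∃ z : D.Z n ⟶ D'.Z n, z ≫ D'.i n = D.i n ≫ f.f n := by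
  have := conf_mono (D'.conf (n + 1) _ rfl)
  apply conf_lift (D'.conf n _ rfl)
  rw [← cancel_mono (D'.i (n + 1)), Category.assoc, Category.assoc, ← D'.hd, f.comm,
    D.hd n _ rfl, Category.assoc, zero_comp, reassoc_of% (E.comp_zero (D.conf n _ rfl)), zero_comp]

lemma TAD.induced_p (D : TAD E C K) (D' : TAD E C L) (f : K ⟶ L) (n m : ℤ) (hnm : n + 1 = m)
    (z : D.Z m ⟶ D'.Z m) (hz : z ≫ D'.i m = D.i m ≫ f.f m) :
    f.f n ≫ D'.p n m hnm = D.p n m hnm ≫ z := by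
  have := conf_mono (D'.conf m _ rfl)
  rw [← cancel_mono (D'.i m), Category.assoc, ← D'.hd, f.comm, D.hd n m hnm, Category.assoc,
    Category.assoc, hz]

/-- Homotopy to zero from a sequence of maps. -/
lemma nullh (f : K ⟶ L) (s : ∀ n : ℤ, K.X (n + 1) ⟶ L.X n)
    (hs : ∀ n, f.f (n + 1) = s n ≫ L.d n (n + 1) + K.d (n + 1) (n + 1 + 1) ≫ s (n + 1)) :
    Nonempty (Homotopy f 0) := by
  refine ⟨{ hom := fun i j => if h : j + 1 = i then (K.XIsoOfEq h).inv ≫ s j else 0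
            zero := ?_, comm := ?_ }⟩
  · intro i j hij
    exact dif_neg hij
  · intro n
    obtain ⟨n, rfl⟩ : ∃ m, n = m + 1 := ⟨n - 1, by simp⟩
    rw [dNext_eq (i := n + 1) (i' := n + 1 + 1) _ rfl, prevD_eq (j := n + 1) (j' := n) _ rfl, hs n]
    simp [add_comm, HomologicalComplex.XIsoOfEq]

lemma TAD.null (h : Ctx E C F W) (D : TAD E C K) (D' : TAD E C L) (f : K ⟶ L)
    (z : D.Z 1 ⟶ D'.Z 1) (hz : z ≫ D'.i 1 = D.i 1 ≫ f.f 1) (hst : St E z 0) :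
    Nonempty (Homotopy f 0) := by
  obtain ⟨R, a, b, hR, e⟩ := hst
  rw [sub_zero] at e
  have hz' : ∀ n, ∃ z : D.Z n ⟶ D'.Z n, z ≫ D'.i n = D.i n ≫ f.f n := D.induced D' f
  choose ζ hζ using hz'
  have hmono : ∀ n, Mono (D'.i n) := fun n => conf_mono (D'.conf n _ rfl)
  have hepi : ∀ n, Epi (D.p n _ rfl) := fun n => conf_epi (D.conf n _ rfl)
  have hζ1 : ζ 1 = z := by
    rw [← cancel_mono (D'.i 1), hζ, hz]
  have hp : ∀ n, f.f n ≫ D'.p n _ rfl = D.p n _ rfl ≫ ζ (n + 1) := fun n =>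
    D.induced_p D' f n _ rfl _ (hζ (n + 1))
  let T : ℤ → Type v := fun n =>
    {s : K.X (n + 1) ⟶ L.X n // D.i (n + 1) ≫ s ≫ D'.p n _ rfl = ζ (n + 1)}
  have t0 : Nonempty (T 0) := by
    obtain ⟨a', ha⟩ := h.extend (D.cofib h 1) (h.proj_triv hR) a
    obtain ⟨b', hb⟩ := hR (D'.p 0 1 rfl) ⟨_, _, D'.conf 0 1 rfl⟩ b
    refine ⟨⟨a' ≫ b', ?_⟩⟩
    change D.i 1 ≫ (a' ≫ b') ≫ D'.p 0 1 rfl = ζ 1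
    rw [Category.assoc, hb, reassoc_of% ha, hζ1, e]
  obtain ⟨t0⟩ := t0
  obtain ⟨t, -, hr⟩ := zseq0 (T := T)
    (fun n s s' => f.f (n + 1) = s.1 ≫ L.d n (n + 1) + K.d (n + 1) (n + 1 + 1) ≫ s'.1)
    (fun n s => by
      obtain ⟨w, hw⟩ := conf_desc (D.conf (n + 1) _ rfl) (f.f (n + 1) - s.1 ≫ L.d n (n + 1)) (by
        have s2 := s.2
        rw [Preadditive.comp_sub, ← hζ, D'.hd n _ rfl, reassoc_of% s2, sub_self])
      obtain ⟨s', hs'⟩ := h.extend (D.cofib h (n + 1 + 1)) (h.proj_triv (D'.proj (n + 1))) w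
      refine ⟨⟨s', ?_⟩, ?_⟩
      · rw [reassoc_of% hs', ← cancel_epi (D.p (n + 1) _ rfl), reassoc_of% hw, ← hp,
          D'.hd n _ rfl]
        simp [E.comp_zero (D'.conf (n + 1) _ rfl)]
      · simp only [D.hd (n + 1) _ rfl, Category.assoc]
        rw [hs', hw]
        abel)
    (fun n s' => by
      obtain ⟨w, hw⟩ := conf_lift (D'.conf (n + 1) _ rfl)
        (f.f (n + 1) - K.d (n + 1) (n + 1 + 1) ≫ s'.1) (by
        have s2 := s'.2
        rw [Preadditive.sub_comp, hp, D.hd (n + 1) _ rfl, Category.assoc, Category.assoc, s2,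
          sub_self])
      obtain ⟨s, hs⟩ := D.proj (n + 1) (D'.p n _ rfl) ⟨_, _, D'.conf n _ rfl⟩ w
      refine ⟨⟨s, ?_⟩, ?_⟩
      · rw [hs, ← cancel_mono (D'.i (n + 1)), Category.assoc, hw, hζ, D.hd (n + 1) _ rfl]
        simp [reassoc_of% (E.comp_zero (D.conf (n + 1) _ rfl))]
      · simp only [D'.hd n _ rfl]
        rw [reassoc_of% hs, hw]
        abel) t0
  exact nullh f (fun n => (t n).1) hr

lemma TAD.st_of_homotopy (D : TAD E C K) (D' : TAD E C L) (f g : K ⟶ L) (H : Homotopy f g)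
    (z z' : D.Z 1 ⟶ D'.Z 1) (hz : z ≫ D'.i 1 = D.i 1 ≫ f.f 1)
    (hz' : z' ≫ D'.i 1 = D.i 1 ≫ g.f 1) : St E z z' := by
  have := conf_mono (D'.conf 1 _ rfl)
  refine ⟨K.X 1, D.i 1, H.hom 1 0 ≫ D'.p 0 1 rfl, D.proj 1, ?_⟩
  rw [← cancel_mono (D'.i 1), Preadditive.sub_comp, hz, hz', H.comm 1,
    dNext_eq (i := 1) (i' := 2) _ rfl, prevD_eq (j := 1) (j' := 0) _ rfl]
  rw [D.hd 1 2 rfl, D'.hd 0 1 rfl]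
  simp [reassoc_of% (E.comp_zero (D.conf 1 2 rfl))]

end ExPr

namespace ExPr

variable {E : ExactStructure 𝒜} {C F W : MorphismProperty 𝒜}

lemma cone_step {K0 Z0 Z1 M0 L0 Y0 L1 Y1 A0 A1 : 𝒜} {iK : Z0 ⟶ K0} {pK : K0 ⟶ Z1}
    {k0 : M0 ⟶ L0} {pL : L0 ⟶ Y0} {iL : Y0 ⟶ L1} {pL1 : L1 ⟶ Y1} {z0 : Z0 ⟶ Y0} {z1 : Z1 ⟶ Y1}
    {f : K0 ⟶ L1} {a0 : A0 ⟶ L0} {b0 : A0 ⟶ Z0} {a1 : A1 ⟶ L1} {b1 : A1 ⟶ Z1}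
    (hK : E.conflation iK pK) (hL0 : E.conflation k0 pL) (hL1 : E.conflation iL pL1)
    (hf0 : iK ≫ f = z0 ≫ iL) (hf1 : f ≫ pL1 = pK ≫ z1)
    (h0 : IsPullback a0 b0 pL z0) (h1 : IsPullback a1 b1 pL1 z1) :
    ∃ π : K0 ⊞ L0 ⟶ A1, π ≫ a1 = - biprod.desc f (pL ≫ iL) ∧ π ≫ b1 = - (biprod.fst ≫ pK) ∧
      E.conflation (biprod.lift (b0 ≫ iK) (-a0)) π := by
  have hKm := conf_mono hK
  have hLm := conf_mono hL1
  have wK := E.comp_zero hK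
  have wL := E.comp_zero hL1
  have w0 := h0.w
  obtain ⟨j, hj1, hj2, hj⟩ := conf_pullback h1 hL1
  let u : K0 ⟶ A1 := h1.lift f pK hf1
  let π : K0 ⊞ L0 ⟶ A1 := (biprod.braiding K0 L0).hom ≫ biprod.map pL (𝟙 K0) ≫ biprod.desc j u
  have hu1 : u ≫ a1 = f := h1.lift_fst _ _ _
  have hu2 : u ≫ b1 = pK := h1.lift_snd _ _ _
  have hπ : π = biprod.snd ≫ pL ≫ j + biprod.fst ≫ u := by
    simp only [π, biprod.braiding_hom]
    have e : biprod.lift biprod.snd biprod.fst ≫ biprod.map pL (𝟙 K0) =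
        biprod.lift ((biprod.snd : K0 ⊞ L0 ⟶ L0) ≫ pL) biprod.fst := by
      apply biprod.hom_ext <;> simp
    rw [← Category.assoc, e, biprod.lift_desc, Category.assoc]
  have hπ1 : π ≫ a1 = biprod.desc f (pL ≫ iL) := by
    rw [hπ]
    ext <;> simp [hu1, hj1]
  have hπ2 : π ≫ b1 = biprod.fst ≫ pK := by
    rw [hπ]
    ext <;> simp [hu2, hj2]
  have hd : IsDeflation E π := by
    apply defl_iso_left
    apply defl_comp (defl_map_id ⟨_, _, hL0⟩ _)
    apply defl_desc hj
    rw [hu2]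
    exact ⟨_, _, hK⟩
  refine ⟨-π, by simp [hπ1], by simp [hπ2], ?_⟩
  have : E.conflation (biprod.lift (b0 ≫ iK) (-a0)) π := by
    refine conf_of_defl hd ⟨fun s t hst => ?_⟩ ?_ (fun t ht => ?_)
    · have e1 := congrArg (· ≫ biprod.fst) hst
      have e2 := congrArg (· ≫ biprod.snd) hst
      simp only [Category.assoc, biprod.lift_fst, biprod.lift_snd, Preadditive.comp_neg,
        neg_inj] at e1 e2
      apply h0.hom_ext e2
      rw [← cancel_mono iK]
      simpa using e1
    · apply h1.hom_ext
      · rw [Category.assoc, hπ1, biprod.lift_desc, Category.assoc, hf0, zero_comp,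
          Preadditive.neg_comp, reassoc_of% w0]
        simp
      · simp [hπ2, wK]
    · have e1 : t ≫ biprod.fst ≫ pK = 0 := by rw [← hπ2, reassoc_of% ht, zero_comp]
      have e2 : t ≫ biprod.desc f (pL ≫ iL) = 0 := by rw [← hπ1, reassoc_of% ht, zero_comp]
      obtain ⟨s, hs⟩ := conf_lift hK (t ≫ biprod.fst) (by simpa using e1)
      refine ⟨h0.lift (-(t ≫ biprod.snd)) s ?_, ?_⟩
      · rw [← cancel_mono iL, Category.assoc s, ← hf0, reassoc_of% hs]
        rw [biprod.desc_eq, Preadditive.comp_add] at e2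
        rw [eq_neg_of_add_eq_zero_left e2]
        simp
      · ext <;> simp [hs]
  simpa using conf_smul this (-1)

open CochainComplex

/-- The terms of the mapping cone are biproducts. -/
noncomputable def coneIso {K L : CochainComplex 𝒜 ℤ} (φ : K ⟶ L) (n : ℤ) :
    K.X (n + 1) ⊞ L.X n ≅ (mappingCone φ).X n where
  hom := biprod.desc ((mappingCone.inl φ).v (n + 1) n (by lia)) ((mappingCone.inr φ).f n)
  inv := biprod.lift ((mappingCone.fst φ).1.v n (n + 1) rfl)
    ((mappingCone.snd φ).v n n (add_zero n))
  hom_inv_id := by ext <;> simp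
  inv_hom_id := by
    rw [biprod.lift_desc, mappingCone.id_X]

lemma Ctx.TAD_cone (h : Ctx E C F W) {K L : CochainComplex 𝒜 ℤ} (φ : K ⟶ L) (D : TAD E C K)
    (D' : TAD E C L) : Nonempty (TAD E C (mappingCone φ)) := by
  have hz' : ∀ n, ∃ z : D.Z n ⟶ D'.Z n, z ≫ D'.i n = D.i n ≫ φ.f n := D.induced D' φ
  choose z hz using hz'
  have hpb : ∀ n : ℤ, ∃ (A : 𝒜) (a : A ⟶ L.X n) (b : A ⟶ D.Z (n + 1)),
      IsPullback a b (D'.p n (n + 1) rfl) (z (n + 1)) := fun n => by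
    obtain ⟨A, a, b, _, _, hp, _⟩ := E.pullback_deflation (D'.conf n (n + 1) rfl) (z (n + 1))
    exact ⟨A, a, b, hp⟩
  choose A a b hpb using hpb
  have hs := fun n => cone_step (D.conf (n + 1) _ rfl) (D'.conf n _ rfl) (D'.conf (n + 1) _ rfl)
    (hz (n + 1)).symm (D.induced_p D' φ (n + 1) _ rfl _ (hz _)) (hpb n) (hpb (n + 1))
  choose π h1 h2 h3 using hs
  refine ⟨TAD.mk' A (fun n => biprod.lift (b n ≫ D.i (n + 1)) (-a n) ≫ (coneIso φ n).hom)
    (fun n => (coneIso φ n).inv ≫ π n) (fun n => ?_) (fun n => ?_) (fun n => ?_) (fun n => ?_)⟩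
  · exact E.conflation_iso (Iso.refl _) (coneIso φ n) (Iso.refl _) (h3 n) (by simp) (by simp)
  · rw [← cancel_epi (coneIso φ n).hom]
    have e : π n ≫ biprod.lift (b (n + 1) ≫ D.i (n + 1 + 1)) (-a (n + 1)) =
        biprod.lift (-(biprod.fst ≫ K.d (n + 1) (n + 1 + 1)))
          (biprod.desc (φ.f (n + 1)) (L.d n (n + 1))) := by
      rw [D.hd (n + 1) _ rfl, D'.hd n _ rfl]
      have := h2 n
      have := h1 n
      ext <;> simp [reassoc_of% (h2 n), reassoc_of% (h1 n), h1 n]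
    rw [Category.assoc, Iso.hom_inv_id_assoc, reassoc_of% e]
    apply biprod.hom_ext'
    · simp [coneIso, mappingCone.inl_v_d φ (n + 1) n (n + 1 + 1) (by lia) (by lia)]
      abel
    · simp [coneIso]
  · obtain ⟨j, _, _, hj⟩ := conf_pullback (hpb n) (D'.conf n _ rfl)
    exact h.cof_ext hj (D'.cof _) (D.cof _)
  · exact proj_iso (coneIso φ n) (proj_biprod (D.proj _) (D'.proj _))

/-- shift -/
noncomputable def TAD.shift {K : CochainComplex 𝒜 ℤ} (D : TAD E C K) (a : ℤ) :
    TAD E C (K⟦a⟧) where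
  Z n := D.Z (n + a)
  i n := D.i (n + a)
  p n m h := a.negOnePow • D.p (n + a) (m + a) (by lia)
  conf n m h := conf_smul (D.conf (n + a) (m + a) (by lia)) _
  hd n m h := by
    rw [CochainComplex.shiftFunctor_obj_d', D.hd (n + a) (m + a) (by lia)]
    exact (Linear.units_smul_comp _ _ _).symm
  cof n := D.cof _
  proj n := D.proj _

lemma Ctx.TAD_zero (h : Ctx E C F W) : Nonempty (TAD E C (0 : CochainComplex 𝒜 ℤ)) := by
  have hz : ∀ n, IsZero ((0 : CochainComplex 𝒜 ℤ).X n) := fun n =>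
    (HomologicalComplex.eval 𝒜 (ComplexShape.up ℤ) n).map_isZero (isZero_zero _)
  refine ⟨TAD.mk' (fun _ => 0) (fun _ => 0) (fun _ => 0) (fun n => ?_) (fun n => ?_)
    (fun n => h.cof_zero) (fun n => proj_iso ((isZero_zero 𝒜).iso (hz n)) proj_zero)⟩
  · exact E.conflation_iso (Iso.refl _) ((isZero_zero 𝒜).iso (hz n)) (Iso.refl _) (E.id_deflation 0)
      ((isZero_zero 𝒜).eq_of_src _ _) ((isZero_zero 𝒜).eq_of_src _ _)
  · exact (hz n).eq_of_src _ _

/-- the triangulated subcategory -/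
def TAP (E : ExactStructure 𝒜) (C : MorphismProperty 𝒜) :
    ObjectProperty (HomotopyCategory 𝒜 (ComplexShape.up ℤ)) := fun X =>
  ∃ (K : CochainComplex 𝒜 ℤ), Nonempty (TAD E C K) ∧
    Nonempty (X ≅ (HomotopyCategory.quotient 𝒜 (ComplexShape.up ℤ)).obj K)

open Pretriangulated

lemma Ctx.TAP_tri (h : Ctx E C F W) : (TAP E C).IsTriangulated := by
  have i0 : (TAP E C).IsClosedUnderIsomorphisms := ⟨by
    rintro X Y e ⟨K, hK, ⟨e'⟩⟩
    exact ⟨K, hK, ⟨e.symm ≪≫ e'⟩⟩⟩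
  have i1 : (TAP E C).ContainsZero := ⟨⟨0, isZero_zero _, 0, h.TAD_zero,
    ⟨(HomotopyCategory.quotient 𝒜 (ComplexShape.up ℤ)).mapZeroObject.symm⟩⟩⟩
  have i2 : (TAP E C).IsStableUnderShift ℤ := ⟨fun a => ⟨by
    rintro X ⟨K, ⟨D⟩, ⟨e⟩⟩
    exact ⟨K⟦a⟧, ⟨D.shift a⟩, ⟨(CategoryTheory.shiftFunctor _ a).mapIso e ≪≫
      (((HomotopyCategory.quotient 𝒜 (ComplexShape.up ℤ)).commShiftIso a).app K).symm⟩⟩⟩⟩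
  have i3 : (TAP E C).IsTriangulatedClosed₃ := .mk' (by
    rintro T hT ⟨K, ⟨D⟩, ⟨e⟩⟩ ⟨L, ⟨D'⟩, ⟨e'⟩⟩
    obtain ⟨φ, hφ⟩ := (HomotopyCategory.quotient 𝒜 (ComplexShape.up ℤ)).map_surjective
      (e.inv ≫ T.mor₁ ≫ e'.hom)
    exact ⟨mappingCone φ, h.TAD_cone φ D D', ⟨Triangle.π₃.mapIso (isoTriangleOfIso₁₂ T
      (mappingCone.triangleh φ) hT (HomotopyCategory.mappingCone_triangleh_distinguished φ) e e'
      (by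
        change T.mor₁ ≫ e'.hom = e.hom ≫ (HomotopyCategory.quotient 𝒜 (ComplexShape.up ℤ)).map φ
        rw [hφ, Iso.hom_inv_id_assoc]))⟩⟩)
  have i4 : (TAP E C).IsTriangulatedClosed₂ := .of_isTriangulatedClosed₃
  exact { toIsTriangulatedClosed₂ := i4 }

end ExPr

namespace ExPr

variable {E : ExactStructure 𝒜} {C F W : MorphismProperty 𝒜}

/-- The quotient functor. -/
abbrev qf (𝒜 : Type u) [Category.{v} 𝒜] [Preadditive 𝒜] :=
  HomotopyCategory.quotient 𝒜 (ComplexShape.up ℤ)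

/-- `u` is the morphism on `Z 1` represented by `g`. -/
def Rep (W : MorphismProperty 𝒜) {K L : CochainComplex 𝒜 ℤ} (D : TAD E C K) (D' : TAD E C L)
    (g : (qf 𝒜).obj K ⟶ (qf 𝒜).obj L) (u : W.Q.obj (D.Z 1) ⟶ W.Q.obj (D'.Z 1)) : Prop :=
  ∃ (f : K ⟶ L) (z : D.Z 1 ⟶ D'.Z 1), (qf 𝒜).map f = g ∧ z ≫ D'.i 1 = D.i 1 ≫ f.f 1 ∧
    W.Q.map z = u

variable {K L M : CochainComplex 𝒜 ℤ} {D : TAD E C K} {D' : TAD E C L} {D'' : TAD E C M}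

lemma Rep.exists (D : TAD E C K) (D' : TAD E C L) (g : (qf 𝒜).obj K ⟶ (qf 𝒜).obj L) :
    ∃ u, Rep W D D' g u := by
  obtain ⟨f, hf⟩ := (qf 𝒜).map_surjective g
  obtain ⟨z, hz⟩ := D.induced D' f 1
  exact ⟨_, f, z, hf, hz, rfl⟩

lemma Rep.unique (h : Ctx E C F W) {g : (qf 𝒜).obj K ⟶ (qf 𝒜).obj L}
    {u u' : W.Q.obj (D.Z 1) ⟶ W.Q.obj (D'.Z 1)} (hu : Rep W D D' g u) (hu' : Rep W D D' g u') :
    u = u' := by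
  obtain ⟨f, z, hf, hz, rfl⟩ := hu
  obtain ⟨f', z', hf', hz', rfl⟩ := hu'
  exact h.loc_eq (D.st_of_homotopy D' f f' (HomotopyCategory.homotopyOfEq _ _ (hf.trans hf'.symm))
    z z' hz hz')

lemma Rep.inj (h : Ctx E C F W) {g g' : (qf 𝒜).obj K ⟶ (qf 𝒜).obj L}
    {u : W.Q.obj (D.Z 1) ⟶ W.Q.obj (D'.Z 1)} (hu : Rep W D D' g u) (hu' : Rep W D D' g' u) :
    g = g' := by
  obtain ⟨f, z, rfl, hz, e⟩ := hu
  obtain ⟨f', z', rfl, hz', e'⟩ := hu'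
  have hst := h.st_of_loc_eq (D.cof 1) (e.trans e'.symm)
  obtain ⟨R, a, b, hR, e⟩ := hst
  obtain ⟨H⟩ := TAD.null h D D' (f - f') (z - z') (by simp [hz, hz'])
    ⟨R, a, b, hR, by rw [sub_zero, e]⟩
  have := HomotopyCategory.eq_of_homotopy _ _ H
  rwa [Functor.map_sub, Functor.map_zero, sub_eq_zero] at this

lemma Rep.surj (h : Ctx E C F W) (u : W.Q.obj (D.Z 1) ⟶ W.Q.obj (D'.Z 1)) :
    ∃ g, Rep W D D' g u := by
  obtain ⟨z, hz⟩ := h.loc_full (D.cof 1) u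
  obtain ⟨f, hf⟩ := D.extend h D' z
  exact ⟨_, f, z, rfl, hf.symm, hz⟩

lemma Rep.id (D : TAD E C K) : Rep W D D (𝟙 _) (𝟙 _) :=
  ⟨𝟙 _, 𝟙 _, by simp, by simp, by simp⟩

lemma Rep.comp {g : (qf 𝒜).obj K ⟶ (qf 𝒜).obj L} {g' : (qf 𝒜).obj L ⟶ (qf 𝒜).obj M}
    {u : W.Q.obj (D.Z 1) ⟶ W.Q.obj (D'.Z 1)} {u' : W.Q.obj (D'.Z 1) ⟶ W.Q.obj (D''.Z 1)}
    (hu : Rep W D D' g u) (hu' : Rep W D' D'' g' u') : Rep W D D'' (g ≫ g') (u ≫ u') := by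
  obtain ⟨f, z, rfl, hz, rfl⟩ := hu
  obtain ⟨f', z', rfl, hz', rfl⟩ := hu'
  refine ⟨f ≫ f', z ≫ z', by simp, ?_, by simp⟩
  rw [Category.assoc, hz', reassoc_of% hz, HomologicalComplex.comp_f]

lemma Rep.iso (h : Ctx E C F W) (D : TAD E C K) (D' : TAD E C L)
    (e : (qf 𝒜).obj K ≅ (qf 𝒜).obj L) : Nonempty (W.Q.obj (D.Z 1) ≅ W.Q.obj (D'.Z 1)) := by
  obtain ⟨u, hu⟩ := Rep.exists (W := W) D D' e.hom
  obtain ⟨u', hu'⟩ := Rep.exists (W := W) D' D e.inv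
  refine ⟨⟨u, u', ?_, ?_⟩⟩
  · exact Rep.unique h (by simpa using hu.comp hu') (Rep.id D)
  · exact Rep.unique h (by simpa using hu'.comp hu) (Rep.id _)

lemma TAP_choice (X : (TAP E C).FullSubcategory) : ∃ (K : CochainComplex 𝒜 ℤ),
    Nonempty (TAD E C K × (X.obj ≅ (qf 𝒜).obj K)) := by
  obtain ⟨K, ⟨D⟩, ⟨e⟩⟩ := X.property
  exact ⟨K, ⟨D, e⟩⟩

/-- chosen data -/
noncomputable def chD (X : (TAP E C).FullSubcategory) : TAD E C (TAP_choice X).choose :=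
  (TAP_choice X).choose_spec.some.1

/-- chosen data -/
noncomputable def chE (X : (TAP E C).FullSubcategory) :
    X.obj ≅ (qf 𝒜).obj (TAP_choice X).choose :=
  (TAP_choice X).choose_spec.some.2

/-- the comparison functor -/
noncomputable def Phi (h : Ctx E C F W) : (TAP E C).FullSubcategory ⥤ W.Localization where
  obj X := W.Q.obj ((chD X).Z 1)
  map {X Y} g := (Rep.exists (chD X) (chD Y) ((chE X).inv ≫ g.hom ≫ (chE Y).hom)).choose
  map_id X := Rep.unique h (Rep.exists (chD X) (chD X) _).choose_spec
    (by simpa using Rep.id (chD X))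
  map_comp {X Y Z} f g := Rep.unique h (Rep.exists (chD X) (chD Z) _).choose_spec
    (by
      have h1 := (Rep.exists (W := W) (chD X) (chD Y)
        ((chE X).inv ≫ f.hom ≫ (chE Y).hom)).choose_spec
      have h2 := (Rep.exists (W := W) (chD Y) (chD Z)
        ((chE Y).inv ≫ g.hom ≫ (chE Z).hom)).choose_spec
      simpa using h1.comp h2)

lemma Phi_spec (h : Ctx E C F W) {X Y : (TAP E C).FullSubcategory} (g : X ⟶ Y) :
    Rep W (chD X) (chD Y) ((chE X).inv ≫ g.hom ≫ (chE Y).hom) ((Phi h).map g) :=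
  (Rep.exists (chD X) (chD Y) ((chE X).inv ≫ g.hom ≫ (chE Y).hom)).choose_spec

lemma Phi_equiv (h : Ctx E C F W) : (Phi h).IsEquivalence := by
  have h1 : (Phi h).Faithful := ⟨fun {X Y} f g hfg => by
    have e := Rep.inj h (Phi_spec h f) (by rw [hfg]; exact Phi_spec h g)
    rw [cancel_epi, cancel_mono] at e
    exact ObjectProperty.hom_ext _ e⟩
  have h2 : (Phi h).Full := ⟨fun {X Y} u => by
    obtain ⟨g, hg⟩ := Rep.surj h (D := chD X) (D' := chD Y) u
    refine ⟨ObjectProperty.homMk ((chE X).hom ≫ g ≫ (chE Y).inv), ?_⟩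
    exact Rep.unique h (Phi_spec h _) (by simpa using hg)⟩
  have h3 : (Phi h).EssSurj := ⟨fun A => by
    have := Localization.essSurj W.Q W
    obtain ⟨B, ⟨e⟩⟩ := this.mem_essImage A
    obtain ⟨Q, q, hQ, _, hq⟩ := h.repl B
    have := Localization.inverts W.Q W q hq
    obtain ⟨K, D, rfl⟩ := h.exists_TAD hQ
    let X : (TAP E C).FullSubcategory := ⟨(qf 𝒜).obj K, K, ⟨D⟩, ⟨Iso.refl _⟩⟩
    obtain ⟨e'⟩ := Rep.iso h (chD X) D (chE X).symm
    exact ⟨X, ⟨e' ≪≫ asIso (W.Q.map q) ≪≫ e⟩⟩⟩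
  exact {}

lemma Ctx.final (h : Ctx E C F W) : Nonempty (TriangulatedStructure W.Localization) := by
  have := h.TAP_tri
  have := Phi_equiv h
  exact triangulatedStructure_of_equiv (Phi h)

lemma Ctx.tf (h : Ctx E C F W) : TrivFibsAreDeflWithTrivFibKer E F W := by
  intro A B f
  constructor
  · rintro ⟨hF, hW⟩
    obtain ⟨K, k, hk, hK⟩ := (h.hF f).1 hF
    exact ⟨K, k, hk, hK, h.tfib_ker hk hF hW⟩
  · rintro ⟨K, k, hk, -, hK⟩
    exact h.tfib hk hK

end ExPr

/-- A model structure is both exact and weakly projective iff it is projective;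
in that case the homotopy category carries a triangulated structure. -/
theorem stmt_18 (E : ExactStructure 𝒜) (hwic : IsWIC E)
    (C F W : MorphismProperty 𝒜) (hms : IsModelStructure C F W) :
    ((IsExactModelStr E C F W ∧ IsWeaklyProjModelStr E C F W) ↔
      IsProjectiveModelStr E C F W) ∧
    (IsProjectiveModelStr E C F W →
      Nonempty (TriangulatedStructure W.Localization)) := by
  have ctx : IsProjectiveModelStr E C F W → ExPr.Ctx E C F W := fun h =>
    ⟨hwic, hms, h.1.2.1, h.1.2.2, h.2⟩
  refine ⟨⟨fun h => ⟨h.1, h.2.2.1⟩, fun h => ⟨h.1, hms, h.2, h.1.2.1, (ctx h).tf⟩⟩,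
    fun h => (ctx h).final⟩
end
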